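/- arXiv:2301.07353 — 3 statements merged into one kernel-verified Lean document; each statement's English description precedes it below -/
import Mathlib

section
/- Let d ≥ 1 and let Φ assign to every d-tuple P = (p⁽¹⁾,…,p⁽ᵈ⁾) of finite vectors with nonnegative entries of a common length, whose columns share a common support, a value Φ(P) ∈ ℝ≥0, invariantly under simultaneous permutation of the rows and under appending all-zero rows, such that Φ(P ⊞ Q) = Φ(P) + Φ(Q) and Φ(P ⊠ Q) = Φ(P)·Φ(Q) for all P, Q, Φ of the single-row all-ones tuple (1,…,1) is 1, and Φ of the single-row all-zeros tuple is 0. Say P majorizes Q if there is a stochastic matrix T with T p⁽ᵏ⁾ = q⁽ᵏ⁾ for all k. (i) If Φ is such that P majorizes Q implies Φ(P) ≥ Φ(Q), then there exists α ∈ A₋ with Φ = f_α, where f_α(P) = Σ_{i∈I} Π_{k=1}^d (p_i⁽ᵏ⁾)^{α_k} and I is the common support; conversely each f_α with α ∈ A₋ has all of these properties. (ii) If Φ is such that P majorizes Q implies Φ(P) ≤ Φ(Q), then there exists α ∈ A₊ with Φ = f_α; conversely each f_α with α ∈ A₊ has all of these properties. -/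
open scoped BigOperators NNReal

noncomputable section

/-- A probability vector on a finite index type. -/
def IsProbVec {ι : Type*} [Fintype ι] (p : ι → ℝ) : Prop :=
  (∀ i, 0 ≤ p i) ∧ ∑ i, p i = 1

/-- A (column-)stochastic matrix: nonnegative entries, every column sums to `1`. -/
def IsStochastic {ι κ : Type*} [Fintype ι] [Fintype κ] (T : ι → κ → ℝ) : Prop :=
  (∀ i j, 0 ≤ T i j) ∧ ∀ j, ∑ i, T i j = 1

/-- Matrix–vector multiplication. -/
def matVec {ι κ : Type*} [Fintype κ] (T : ι → κ → ℝ) (v : κ → ℝ) : ι → ℝ :=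
  fun i => ∑ j, T i j * v j

/-- Kronecker product of two vectors. -/
def kron {ι κ : Type*} (p : ι → ℝ) (q : κ → ℝ) : ι × κ → ℝ :=
  fun x => p x.1 * q x.2

/-- `n`-fold Kronecker power of a vector. -/
def kpow {ι : Type*} (p : ι → ℝ) (n : ℕ) : (Fin n → ι) → ℝ :=
  fun f => ∏ j, p (f j)

/-- Kronecker product reindexed along `Fin (m * n)`. -/
def kronFin {m n : ℕ} (p : Fin m → ℝ) (q : Fin n → ℝ) : Fin (m * n) → ℝ :=
  fun i => kron p q (finProdFinEquiv.symm i)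

/-- The sum of the `k` largest entries of a nonnegative vector, expressed as the
largest sum over subsets of cardinality at most `k`. -/
def topSum {ι : Type*} [Fintype ι] (p : ι → ℝ) (k : ℕ) : ℝ :=
  ⨆ s ∈ {s : Finset ι | s.card ≤ k}, ∑ i ∈ s, p i

/-- Majorization for nonnegative vectors (possibly of different lengths):
equal total sums, and for each `k` the sum of the `k` largest entries of `p` is
at least that of `q`. -/
def Majorizes {ι κ : Type*} [Fintype ι] [Fintype κ] (p : ι → ℝ) (q : κ → ℝ) : Prop :=
  (∑ i, p i = ∑ j, q j) ∧ ∀ k : ℕ, topSum q k ≤ topSum p k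

/-- The size of the support, `‖p‖₀`. -/
def supp0 {ι : Type*} [Fintype ι] (p : ι → ℝ) : ℕ :=
  (Finset.univ.filter fun i => p i ≠ 0).card

/-- Entrywise nonnegativity. -/
def NonnegVec {n : ℕ} (p : Fin n → ℝ) : Prop := ∀ i, 0 ≤ p i

/-- The modified majorization preorder `≽₀,₁`: majorization plus equality of
support sizes. -/
def MajMod {ι κ : Type*} [Fintype ι] [Fintype κ] (p : ι → ℝ) (q : κ → ℝ) : Prop :=
  Majorizes p q ∧ supp0 p = supp0 q

/-- `f_α(p) = ∑_{i ∈ supp p} (p i)^α`. -/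
def fA {ι : Type*} [Fintype ι] (α : ℝ) (p : ι → ℝ) : ℝ :=
  ∑ i, if p i = 0 then 0 else p i ^ α

/-- Shannon entropy (the terms with `p i = 0` vanish). -/
def H1ent {ι : Type*} [Fintype ι] (p : ι → ℝ) : ℝ := -∑ i, p i * Real.log (p i)

/-- `H₀'(p) = ∑_{i ∈ supp p} log p_i`. -/
def H0' {ι : Type*} [Fintype ι] (p : ι → ℝ) : ℝ :=
  ∑ i, if p i = 0 then 0 else Real.log (p i)

/-- Rényi entropy of order `α` (with `α = 1` the Shannon entropy). -/
def Hent {ι : Type*} [Fintype ι] (α : ℝ) (p : ι → ℝ) : ℝ :=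
  if α = 1 then -∑ i, p i * Real.log (p i)
  else (1 / (1 - α)) * Real.log (∑ i, if p i = 0 then 0 else p i ^ α)

/-- Min-entropy `H_∞(p) = - log max_i p_i`. -/
def HentInf {ι : Type*} [Fintype ι] (p : ι → ℝ) : ℝ := -Real.log (⨆ i, p i)

/-- Kullback–Leibler divergence (the terms with `p i = 0` vanish). -/
def KL {n : ℕ} (p q : Fin n → ℝ) : ℝ :=
  ∑ i, p i * Real.log (p i / q i)

/-- Rényi divergence of order `α` for vectors with common support. -/
def Renyi {n : ℕ} (α : ℝ) (p q : Fin n → ℝ) : ℝ :=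
  if α = 1 then ∑ i, p i * Real.log (p i / q i)
  else (1 / (α - 1)) * Real.log (∑ i, if p i = 0 then 0 else p i ^ α * q i ^ (1 - α))

/-- Max-divergence `D_∞(p‖q) = max_{i ∈ supp q} log (p_i / q_i)`. -/
def RenyiInf {n : ℕ} (p q : Fin n → ℝ) : ℝ :=
  ⨆ i ∈ Finset.univ.filter (fun i => q i ≠ 0), Real.log (p i / q i)

/-- Rényi divergence with values in the extended reals `[0, ∞]`. -/
def RenyiE {n : ℕ} (α : ℝ) (p q : Fin n → ℝ) : EReal :=
  if α = 1 then
    (if ∀ i, p i ≠ 0 → q i ≠ 0 then ((∑ i, p i * Real.log (p i / q i) : ℝ) : EReal) else ⊤)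
  else if α < 1 then
    (if ∃ i, p i ≠ 0 ∧ q i ≠ 0 then
      (((1 / (α - 1)) *
        Real.log (∑ i, if p i = 0 ∨ q i = 0 then 0 else p i ^ α * q i ^ (1 - α)) : ℝ) : EReal)
    else (⊤ : EReal))
  else
    (if ∀ i, p i ≠ 0 → q i ≠ 0 then
      (((1 / (α - 1)) *
        Real.log (∑ i, if p i = 0 then 0 else p i ^ α * q i ^ (1 - α)) : ℝ) : EReal)
    else (⊤ : EReal))

/-- The common support of a tuple of vectors. -/
def suppIdx {d n : ℕ} (P : Fin d → Fin n → ℝ) : Finset (Fin n) :=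
  Finset.univ.filter fun i => ∃ k, P k i ≠ 0

/-- `f_α(P) = ∑_{i ∈ I} ∏_k (p_i^{(k)})^{α_k}` with `I` the common support. -/
def fMat {d n : ℕ} (α : Fin d → ℝ) (P : Fin d → Fin n → ℝ) : ℝ :=
  ∑ i ∈ suppIdx P, ∏ k, P k i ^ α k

/-- The matrix `α`-divergence `D_α`. -/
def Dmat {d n : ℕ} (α : Fin d → ℝ) (P : Fin d → Fin n → ℝ) : ℝ :=
  (1 / ((⨆ k, α k) - 1)) * Real.log (∑ i ∈ suppIdx P, ∏ k, P k i ^ α k)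

/-- The tropical matrix divergence `D^𝕋_β`. -/
def DmatT {d n : ℕ} (β : Fin d → ℝ) (P : Fin d → Fin n → ℝ) : ℝ :=
  (1 / (⨆ k, β k)) * Real.log (⨆ i ∈ suppIdx P, ∏ k, P k i ^ β k)

/-- Membership in `A₊`: entries summing to `1`, all nonnegative. -/
def memAplus {d : ℕ} (α : Fin d → ℝ) : Prop := (∑ k, α k = 1) ∧ ∀ k, 0 ≤ α k

/-- Membership in `A₋`: entries summing to `1`, one entry `≥ 1`, the others `≤ 0`. -/
def memAminus {d : ℕ} (α : Fin d → ℝ) : Prop :=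
  (∑ k, α k = 1) ∧ ∃ k, 1 ≤ α k ∧ ∀ l, l ≠ k → α l ≤ 0

/-- Membership in `B₋`: entries summing to `0`, one entry `≥ 0`, the others `≤ 0`. -/
def memBminus {d : ℕ} (β : Fin d → ℝ) : Prop :=
  (∑ k, β k = 0) ∧ ∃ k, 0 ≤ β k ∧ ∀ l, l ≠ k → β l ≤ 0

/-- `α` is none of the standard basis vectors `e₁, …, e_d`. -/
def notBasis {d : ℕ} (α : Fin d → ℝ) : Prop := ∀ k, α ≠ Pi.single k 1

/-- ℓ¹-distance of two vectors, padding with zeros to a common length. -/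
def l1PadDist {m n : ℕ} (p : Fin m → ℝ) (q : Fin n → ℝ) : ℝ :=
  ∑ i : Fin (max m n),
    |(if h : (i : ℕ) < m then p ⟨(i : ℕ), h⟩ else 0) -
      (if h : (i : ℕ) < n then q ⟨(i : ℕ), h⟩ else 0)|

/-- Index type of the direct sum `⨁_{s=0}^{n-1} p^{⊗(n-1-s)} ⊗ q^{⊗s}`. -/
abbrev TrickIdx (m m' n : ℕ) : Type :=
  Σ s : Fin n, (Fin (n - 1 - (s : ℕ)) → Fin m) × (Fin (s : ℕ) → Fin m')

/-- The standard catalyst `(1/n) ⨁_{s=0}^{n-1} p^{⊗(n-1-s)} ⊗ q^{⊗s}`. -/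
def trick {m m' : ℕ} (p : Fin m → ℝ) (q : Fin m' → ℝ) (n : ℕ) : TrickIdx m m' n → ℝ :=
  fun x => (1 / (n : ℝ)) * (kpow p (n - 1 - (x.1 : ℕ)) x.2.1 * kpow q (x.1 : ℕ) x.2.2)

/-- A valid tuple: nonnegative entries and common support across the tuple. -/
def TupOK {d n : ℕ} (P : Fin d → Fin n → ℝ) : Prop :=
  (∀ k i, 0 ≤ P k i) ∧ ∀ k l i, P k i ≠ 0 ↔ P l i ≠ 0

/-- Matrix majorization of tuples: a single stochastic matrix carrying each column
of `P` to the corresponding column of `Q`. -/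
def TupMaj {d m n : ℕ} (P : Fin d → Fin m → ℝ) (Q : Fin d → Fin n → ℝ) : Prop :=
  ∃ T : Fin n → Fin m → ℝ, IsStochastic T ∧ ∀ k, matVec T (P k) = Q k

/-- The basic properties of a normalized additive and multiplicative
functional on tuples (of a fixed length `d`) of finite nonnegative vectors
with common support: nonnegative values, invariance under simultaneous row
permutations and under appending an all-zero row, additivity under `⊞`,
multiplicativity under `⊠`, and normalization on the single-row all-ones and
all-zeros tuples. -/
def MPhiBase {d : ℕ} (Φ : ∀ n : ℕ, (Fin d → Fin n → ℝ) → ℝ) : Prop :=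
  (∀ (n : ℕ) (P : Fin d → Fin n → ℝ), TupOK P → 0 ≤ Φ n P) ∧
  (∀ (n : ℕ) (σ : Equiv.Perm (Fin n)) (P : Fin d → Fin n → ℝ), TupOK P →
    Φ n (fun k => P k ∘ σ) = Φ n P) ∧
  (∀ (n : ℕ) (P : Fin d → Fin n → ℝ), TupOK P →
    Φ (n + 1) (fun k => Fin.snoc (P k) 0) = Φ n P) ∧
  (∀ (m n : ℕ) (P : Fin d → Fin m → ℝ) (Q : Fin d → Fin n → ℝ),
    TupOK P → TupOK Q →
    Φ (m + n) (fun k => Fin.append (P k) (Q k)) = Φ m P + Φ n Q) ∧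
  (∀ (m n : ℕ) (P : Fin d → Fin m → ℝ) (Q : Fin d → Fin n → ℝ),
    TupOK P → TupOK Q →
    Φ (m * n) (fun k => kronFin (P k) (Q k)) = Φ m P * Φ n Q) ∧
  Φ 1 (fun _ _ => 1) = 1 ∧ Φ 1 (fun _ _ => 0) = 0

namespace MatCls

/-- value of a row -/
def rowF {d : ℕ} (α : Fin d → ℝ) (x : Fin d → ℝ) : ℝ :=
  open Classical in if ∃ k, x k ≠ 0 then ∏ k, x k ^ α k else 0

lemma fMat_eq {d n : ℕ} (α : Fin d → ℝ) (P : Fin d → Fin n → ℝ) :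
    fMat α P = ∑ i, rowF α (fun k => P k i) := by
  unfold fMat suppIdx rowF
  rw [Finset.sum_filter]

lemma rowF_zero {d : ℕ} (α : Fin d → ℝ) : rowF α (fun _ => 0) = 0 := by
  simp [rowF]

lemma rowF_pos_eq {d : ℕ} (hd : 1 ≤ d) (α x : Fin d → ℝ) (hx : ∀ k, 0 < x k) :
    rowF α x = ∏ k, x k ^ α k := by
  unfold rowF
  rw [if_pos ⟨⟨0, hd⟩, (hx _).ne'⟩]

/-- row is either zero or positive -/
lemma row_dich {d n : ℕ} (P : Fin d → Fin n → ℝ) (h : TupOK P) (i : Fin n) :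
    (∀ k, P k i = 0) ∨ (∀ k, 0 < P k i) := by
  by_cases hz : ∀ k, P k i = 0
  · exact Or.inl hz
  · push Not at hz
    obtain ⟨k, hk⟩ := hz
    exact Or.inr fun l => lt_of_le_of_ne (h.1 l i) (Ne.symm ((h.2 k l i).1 hk))

lemma rowF_nonneg {d : ℕ} (α x : Fin d → ℝ) (hx : ∀ k, 0 ≤ x k) : 0 ≤ rowF α x := by
  unfold rowF
  split_ifs
  · exact Finset.prod_nonneg fun k _ => Real.rpow_nonneg (hx k) _
  · exact le_rfl

lemma base_fMat {d : ℕ} (hd : 1 ≤ d) (α : Fin d → ℝ) : MPhiBase (fun n P => fMat (n := n) α P) := by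
  refine ⟨?_, ?_, ?_, ?_, ?_, ?_, ?_⟩
  · intro n P h
    simp only [fMat_eq]
    exact Finset.sum_nonneg fun i _ => rowF_nonneg _ _ fun k => h.1 k i
  · intro n σ P _
    simp only [fMat_eq, Function.comp]
    exact Equiv.sum_comp σ (fun i => rowF α (fun k => P k i))
  · intro n P _
    simp only [fMat_eq]
    rw [Fin.sum_univ_castSucc]
    simp [rowF_zero]
  · intro m n P Q _ _
    simp only [fMat_eq]
    rw [Fin.sum_univ_add]
    simp
  · intro m n P Q hP hQ
    simp only [fMat_eq]
    rw [Finset.sum_mul_sum, ← Finset.sum_product', ← Equiv.sum_comp finProdFinEquiv]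
    refine Finset.sum_congr rfl fun x _ => ?_
    simp only [kronFin, kron, Equiv.symm_apply_apply]
    rcases row_dich P hP x.1 with h | h
    · simp [h, rowF_zero]
    rcases row_dich Q hQ x.2 with h' | h'
    · simp [h', rowF_zero]
    rw [rowF_pos_eq hd _ _ h, rowF_pos_eq hd _ _ h', rowF_pos_eq hd _ _ (fun k => mul_pos (h k) (h' k)),
      ← Finset.prod_mul_distrib]
    exact Finset.prod_congr rfl fun k _ => Real.mul_rpow (h k).le (h' k).le
  · simp only [fMat_eq]
    rw [Fin.sum_univ_one, rowF_pos_eq hd _ _ (fun _ => one_pos)]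
    simp
  · simp [fMat_eq, rowF_zero]

lemma amgm_plus {d : ℕ} (α : Fin d → ℝ) (h : memAplus α) (y : Fin d → ℝ) (hy : ∀ k, 0 < y k) :
    ∏ k, y k ^ α k ≤ ∑ k, α k * y k :=
  Real.geom_mean_le_arith_mean_weighted _ _ _ (fun k _ => h.2 k) h.1 (fun k _ => (hy k).le)

lemma amgm_minus {d : ℕ} (α : Fin d → ℝ) (h : memAminus α) (y : Fin d → ℝ) (hy : ∀ k, 0 < y k) :
    ∑ k, α k * y k ≤ ∏ k, y k ^ α k := by
  classical
  obtain ⟨hs, k0, h1, hl⟩ := h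
  set a := α k0 with ha
  have ha0 : 0 < a := by linarith
  set z := ∏ k, y k ^ α k with hz
  have hzpos : 0 < z := Finset.prod_pos fun k _ => Real.rpow_pos_of_pos (hy k) _
  have hsum : a + ∑ k ∈ Finset.univ.erase k0, α k = 1 := by
    rw [← hs, ← Finset.add_sum_erase _ _ (Finset.mem_univ k0)]
  have key := Real.geom_mean_le_arith_mean_weighted Finset.univ
    (fun k => if k = k0 then 1 / a else - α k / a) (fun k => if k = k0 then z else y k)
    (by
      intro k _
      split_ifs with hk
      · positivity
      · have := hl k hk
        apply div_nonneg <;> linarith)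
    (by
      rw [← Finset.add_sum_erase _ _ (Finset.mem_univ k0)]
      have : ∑ k ∈ Finset.univ.erase k0, (if k = k0 then 1 / a else - α k / a)
          = - (∑ k ∈ Finset.univ.erase k0, α k) / a := by
        rw [neg_div, Finset.sum_div, ← Finset.sum_neg_distrib]
        refine Finset.sum_congr rfl fun k hk => ?_
        rw [if_neg (Finset.ne_of_mem_erase hk), neg_div]
      rw [this, if_pos rfl]
      field_simp
      linarith)
    (by
      intro k _
      split_ifs
      · exact hzpos.le
      · exact (hy k).le)
  rw [← Finset.mul_prod_erase _ _ (Finset.mem_univ k0), ← Finset.add_sum_erase _ _ (Finset.mem_univ k0)] at key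
  have e1 : ∏ k ∈ Finset.univ.erase k0, (if k = k0 then z else y k) ^ (if k = k0 then 1 / a else - α k / a)
      = ∏ k ∈ Finset.univ.erase k0, (y k ^ α k) ^ (-(1/a)) := by
    refine Finset.prod_congr rfl fun k hk => ?_
    rw [if_neg (Finset.ne_of_mem_erase hk), if_neg (Finset.ne_of_mem_erase hk), ← Real.rpow_mul (hy k).le]
    congr 1; ring
  have e2 : ∑ k ∈ Finset.univ.erase k0, (if k = k0 then 1 / a else - α k / a) * (if k = k0 then z else y k)
      = - (∑ k ∈ Finset.univ.erase k0, α k * y k) / a := by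
    rw [neg_div, Finset.sum_div, ← Finset.sum_neg_distrib]
    refine Finset.sum_congr rfl fun k hk => ?_
    rw [if_neg (Finset.ne_of_mem_erase hk), if_neg (Finset.ne_of_mem_erase hk)]; ring
  rw [e1, e2, Real.finsetProd_rpow _ _ (fun k _ => Real.rpow_nonneg (hy k).le _)] at key
  simp only [if_true] at key
  have hW : 0 < ∏ k ∈ Finset.univ.erase k0, y k ^ α k :=
    Finset.prod_pos fun k _ => Real.rpow_pos_of_pos (hy k) _
  have hzz : z = y k0 ^ a * ∏ k ∈ Finset.univ.erase k0, y k ^ α k := by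
    rw [hz, ← Finset.mul_prod_erase _ _ (Finset.mem_univ k0)]
  have e3 : z ^ (1/a) * (∏ k ∈ Finset.univ.erase k0, y k ^ α k) ^ (-(1/a)) = y k0 := by
    rw [hzz, Real.mul_rpow (Real.rpow_nonneg (hy k0).le _) hW.le, mul_assoc, ← Real.rpow_add hW,
      ← Real.rpow_mul (hy k0).le]
    rw [mul_one_div_cancel ha0.ne']
    simp
  rw [e3] at key
  rw [← Finset.add_sum_erase _ _ (Finset.mem_univ k0)]
  have : a * y k0 ≤ z - ∑ k ∈ Finset.univ.erase k0, α k * y k := by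
    calc a * y k0 ≤ a * (1 / a * z + -(∑ k ∈ Finset.univ.erase k0, α k * y k) / a) := by gcongr
      _ = _ := by field_simp; ring
  linarith

/-- ε = 1 or -1 selects the direction. -/
lemma mono_gen {d : ℕ} (hd : 1 ≤ d) (ε : ℝ) (α : Fin d → ℝ) (hs : ∑ k, α k = 1)
    (tang : ∀ y : Fin d → ℝ, (∀ k, 0 < y k) → ε * ∏ k, y k ^ α k ≤ ε * ∑ k, α k * y k)
    (m n : ℕ) (P : Fin d → Fin m → ℝ) (Q : Fin d → Fin n → ℝ)
    (hP : TupOK P) (hQ : TupOK Q) (h : TupMaj P Q) : ε * fMat α P ≤ ε * fMat α Q := by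
  obtain ⟨T, ⟨hT0, hT1⟩, hTP⟩ := h
  rw [fMat_eq, fMat_eq]
  have e : ∑ j, rowF α (fun k => P k j) = ∑ i, ∑ j, T i j * rowF α (fun k => P k j) := by
    rw [Finset.sum_comm]
    refine Finset.sum_congr rfl fun j _ => ?_
    rw [← Finset.sum_mul, hT1, one_mul]
  rw [e, Finset.mul_sum, Finset.mul_sum]
  refine Finset.sum_le_sum fun i _ => ?_
  have hq : ∀ k, Q k i = ∑ j, T i j * P k j := fun k => by rw [← hTP k]; rfl
  rcases row_dich Q hQ i with h0 | hpos
  · have : ∑ j, T i j * rowF α (fun k => P k j) = 0 := by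
      refine Finset.sum_eq_zero fun j _ => ?_
      rcases row_dich P hP j with hz | hp
      · simp [hz, rowF_zero]
      · have h1 := hq ⟨0, hd⟩
        rw [h0, eq_comm, Finset.sum_eq_zero_iff_of_nonneg (fun j _ => mul_nonneg (hT0 i j) (hP.1 _ j))] at h1
        have := (mul_eq_zero.1 (h1 j (Finset.mem_univ j))).resolve_right (hp _).ne'
        rw [this, zero_mul]
    rw [this]
    simp [h0, rowF_zero]
  · rw [rowF_pos_eq hd _ _ hpos]
    set W := ∏ k, Q k i ^ α k with hW
    have hWpos : 0 < W := Finset.prod_pos fun k _ => Real.rpow_pos_of_pos (hpos k) _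
    have hj : ∀ j, ε * (T i j * rowF α (fun k => P k j)) ≤
        ε * (W * ∑ k, α k * (T i j * P k j / Q k i)) := by
      intro j
      rcases row_dich P hP j with hz | hp
      · simp [hz, rowF_zero]
      · rw [rowF_pos_eq hd _ _ hp]
        have t := tang (fun k => P k j / Q k i) (fun k => div_pos (hp k) (hpos k))
        have e1 : ∏ k, (P k j / Q k i) ^ α k = (∏ k, P k j ^ α k) / W := by
          rw [hW, ← Finset.prod_div_distrib]
          exact Finset.prod_congr rfl fun k _ => Real.div_rpow (hp k).le (hpos k).le _
        rw [e1] at t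
        have t2 := mul_le_mul_of_nonneg_left t (mul_nonneg (hT0 i j) hWpos.le)
        calc ε * (T i j * ∏ k, P k j ^ α k) = T i j * W * (ε * ((∏ k, P k j ^ α k) / W)) := by
              field_simp
          _ ≤ _ := t2
          _ = _ := by
              have : ∑ k, α k * (T i j * P k j / Q k i) = T i j * ∑ k, α k * (P k j / Q k i) := by
                rw [Finset.mul_sum]
                exact Finset.sum_congr rfl fun k _ => by ring
              rw [this]; ring
    calc ε * ∑ j, T i j * rowF α (fun k => P k j) = ∑ j, ε * (T i j * rowF α (fun k => P k j)) := by
          rw [Finset.mul_sum]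
      _ ≤ ∑ j, ε * (W * ∑ k, α k * (T i j * P k j / Q k i)) := Finset.sum_le_sum fun j _ => hj j
      _ = ε * (W * ∑ k, α k * ((∑ j, T i j * P k j) / Q k i)) := by
          rw [← Finset.mul_sum, ← Finset.mul_sum, Finset.sum_comm]
          congr 2
          refine Finset.sum_congr rfl fun k _ => ?_
          rw [← Finset.mul_sum, Finset.sum_div]
      _ = ε * W := by
          have : ∀ k, α k * ((∑ j, T i j * P k j) / Q k i) = α k := fun k => by
            rw [← hq k, div_self (hpos k).ne', mul_one]
          simp only [this, hs, mul_one]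

/-! ### Forward direction -/

/-- value on a single row -/
def ph {d : ℕ} (Φ : ∀ n : ℕ, (Fin d → Fin n → ℝ) → ℝ) (x : Fin d → ℝ) : ℝ :=
  Φ 1 (fun k _ => x k)

lemma ok_pos {d n : ℕ} (P : Fin d → Fin n → ℝ) (h : ∀ k i, 0 < P k i) : TupOK P :=
  ⟨fun k i => (h k i).le, fun k l i => ⟨fun _ => (h l i).ne', fun _ => (h k i).ne'⟩⟩

lemma phi_sum {d : ℕ} (Φ : ∀ n : ℕ, (Fin d → Fin n → ℝ) → ℝ) (hΦ : MPhiBase Φ) :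
    ∀ (n : ℕ) (P : Fin d → Fin n → ℝ), TupOK P → Φ n P = ∑ i, ph Φ (fun k => P k i) := by
  obtain ⟨-, -, -, hadd, -, -, -⟩ := hΦ
  intro n
  induction n with
  | zero =>
    intro P hP
    have h := hadd 0 0 P P hP hP
    have e : (fun k => Fin.append (P k) (P k)) = P := by
      funext k i; exact i.elim0
    have h' : Φ 0 P = Φ 0 P + Φ 0 P := by
      conv_lhs => rw [← e]
      exact h
    simp
    linarith
  | succ n ih =>
    intro P hP
    have h1 : TupOK (fun k (i : Fin n) => P k i.castSucc) :=
      ⟨fun k i => hP.1 k _, fun k l i => hP.2 k l _⟩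
    have h2 : TupOK (fun k (_ : Fin 1) => P k (Fin.last n)) :=
      ⟨fun k i => hP.1 k _, fun k l i => hP.2 k l _⟩
    have h := hadd n 1 _ _ h1 h2
    rw [Fin.sum_univ_castSucc, ← ih _ h1]
    rw [← show Φ 1 (fun k _ => P k (Fin.last n)) = ph Φ (fun k => P k (Fin.last n)) from rfl, ← h]
    congr 1
    funext k i
    refine Fin.lastCases ?_ (fun i => ?_) i
    · exact (Fin.append_right (fun (i : Fin n) => P k i.castSucc) (fun (_ : Fin 1) => P k (Fin.last n)) 0).symm
    · exact (Fin.append_left (fun (i : Fin n) => P k i.castSucc) (fun (_ : Fin 1) => P k (Fin.last n)) i).symm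

lemma phi_mul {d : ℕ} (Φ : ∀ n : ℕ, (Fin d → Fin n → ℝ) → ℝ) (hΦ : MPhiBase Φ)
    (x y : Fin d → ℝ) (hx : ∀ k, 0 < x k) (hy : ∀ k, 0 < y k) :
    ph Φ (fun k => x k * y k) = ph Φ x * ph Φ y := by
  obtain ⟨-, -, -, -, hmul, -, -⟩ := hΦ
  exact hmul 1 1 (fun k _ => x k) (fun k _ => y k) (ok_pos _ fun k _ => hx k) (ok_pos _ fun k _ => hy k)

lemma phi_pos {d : ℕ} (Φ : ∀ n : ℕ, (Fin d → Fin n → ℝ) → ℝ) (hΦ : MPhiBase Φ)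
    (x : Fin d → ℝ) (hx : ∀ k, 0 < x k) : 0 < ph Φ x := by
  have h := phi_mul Φ hΦ x (fun k => (x k)⁻¹) hx (fun k => inv_pos.2 (hx k))
  have e : (fun k => x k * (x k)⁻¹) = fun _ => (1:ℝ) := by
    funext k; exact mul_inv_cancel₀ (hx k).ne'
  have h1 : ph Φ (fun _ => 1) = 1 := hΦ.2.2.2.2.2.1
  rw [e, h1] at h
  have h0 : 0 ≤ ph Φ x := hΦ.1 1 _ (ok_pos _ fun k _ => hx k)
  refine lt_of_le_of_ne h0 fun hh => ?_
  rw [← hh] at h; simp at h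

/-- merging two rows -/
lemma maj_merge {d : ℕ} (x y : Fin d → ℝ) :
    TupMaj (fun k => ![x k, y k]) (fun k (_ : Fin 1) => x k + y k) := by
  refine ⟨fun _ _ => 1, ⟨fun _ _ => zero_le_one, fun j => by simp⟩, fun k => ?_⟩
  funext i
  simp [matVec, Fin.sum_univ_two]

lemma maj_split {d : ℕ} (x : Fin d → ℝ) (s t : ℝ) (hs : 0 < s) (ht : 0 < t) :
    TupMaj (fun k (_ : Fin 1) => (s + t) * x k) (fun k => ![s * x k, t * x k]) := by
  refine ⟨fun i _ => ![s / (s + t), t / (s + t)] i, ⟨fun i _ => ?_, fun j => ?_⟩, fun k => ?_⟩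
  · fin_cases i <;> simp <;> positivity
  · simp [Fin.sum_univ_two]; field_simp
  · have : s + t ≠ 0 := by positivity
    funext i
    fin_cases i <;> simp [matVec] <;> field_simp

lemma ok_two {d : ℕ} (x y : Fin d → ℝ) (hx : ∀ k, 0 < x k) (hy : ∀ k, 0 < y k) :
    TupOK (fun k => ![x k, y k]) := by
  refine ok_pos _ fun k i => ?_
  fin_cases i
  · exact hx k
  · exact hy k

lemma phi_two {d : ℕ} (Φ : ∀ n : ℕ, (Fin d → Fin n → ℝ) → ℝ) (hΦ : MPhiBase Φ)
    (x y : Fin d → ℝ) (hx : ∀ k, 0 < x k) (hy : ∀ k, 0 < y k) :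
    Φ 2 (fun k => ![x k, y k]) = ph Φ x + ph Φ y := by
  rw [phi_sum Φ hΦ 2 _ (ok_two x y hx hy), Fin.sum_univ_two]
  simp

/-- an additive positive normalized function on positive reals is the identity -/
lemma add_id (g : ℝ → ℝ) (hpos : ∀ t, 0 < t → 0 < g t)
    (hadd : ∀ s t, 0 < s → 0 < t → g (s + t) = g s + g t) (h1 : g 1 = 1) (t : ℝ) (ht : 0 < t) :
    g t = t := by
  have hnat : ∀ (n : ℕ) (s : ℝ), 0 < s → g ((n + 1 : ℕ) * s) = (n + 1 : ℕ) * g s := by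
    intro n s hs
    induction n with
    | zero => simp
    | succ n ih =>
      have : ((n + 1 + 1 : ℕ) : ℝ) * s = ((n + 1 : ℕ) : ℝ) * s + s := by push_cast; ring
      rw [this, hadd _ _ (by positivity) hs, ih]; push_cast; ring
  have hmono : ∀ s t, 0 < s → s ≤ t → g s ≤ g t := by
    intro s t hs hst
    rcases hst.eq_or_lt with h | h
    · rw [h]
    · have := hadd s (t - s) hs (by linarith)
      rw [add_sub_cancel] at this
      have := hpos (t - s) (by linarith)
      linarith
  have hbd : ∀ n : ℕ, (n + 1 : ℕ) * |g t - t| ≤ 1 := by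
    intro n
    have hn : (0:ℝ) < (n + 1 : ℕ) * t := by positivity
    have hl := Nat.floor_le hn.le
    have hu := Nat.lt_floor_add_one (((n + 1 : ℕ) : ℝ) * t)
    set m := ⌊((n + 1 : ℕ) : ℝ) * t⌋₊
    have hg := hnat n t ht
    have hm1 : g (m + 1) = m + 1 := by
      have := hnat m 1 one_pos
      rw [h1] at this; simpa using this
    have u := hmono _ _ hn hu.le
    have l : (m : ℝ) ≤ g ((n + 1 : ℕ) * t) := by
      rcases Nat.eq_zero_or_pos m with h0 | h0
      · rw [h0]; simpa using (hpos _ hn).le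
      · obtain ⟨m', hm'⟩ := Nat.exists_eq_succ_of_ne_zero h0.ne'
        have := hnat m' 1 one_pos
        rw [h1, ← Nat.succ_eq_add_one, ← hm', mul_one] at this
        have h2 := hmono m _ (by exact_mod_cast h0) hl
        linarith
    rw [hg] at u l
    rw [hm1] at u
    have : ((n + 1 : ℕ) : ℝ) * |g t - t| = |((n + 1 : ℕ) : ℝ) * g t - (n + 1 : ℕ) * t| := by
      rw [← mul_sub, abs_mul, abs_of_nonneg (Nat.cast_nonneg (α := ℝ) (n + 1))]
    rw [this, abs_le]
    constructor <;> linarith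
  by_contra hne
  have hp : 0 < |g t - t| := abs_pos.2 (sub_ne_zero.2 hne)
  obtain ⟨n, hn⟩ := exists_nat_gt (1 / |g t - t|)
  have := hbd n
  rw [div_lt_iff₀ hp] at hn
  push_cast at this
  linarith

lemma upd_pos {d : ℕ} (k : Fin d) (t : ℝ) (ht : 0 < t) :
    ∀ l, 0 < Function.update (1 : Fin d → ℝ) k t l := by
  intro l
  by_cases h : l = k
  · subst h; simpa
  · simp [h]

/-- abstract form of the regular solutions -/
lemma phi_form {d : ℕ} (φ : (Fin d → ℝ) → ℝ) (hpos : ∀ x, (∀ k, 0 < x k) → 0 < φ x)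
    (hmul : ∀ x y : Fin d → ℝ, (∀ k, 0 < x k) → (∀ k, 0 < y k) → φ (fun k => x k * y k) = φ x * φ y)
    (h1 : φ 1 = 1)
    (hc : ∀ k, ContinuousOn (fun t : ℝ => φ (Function.update 1 k t)) (Set.Ioi 0)) :
    ∃ α : Fin d → ℝ, ∀ x, (∀ k, 0 < x k) → φ x = ∏ k, x k ^ α k := by
  classical
  have hk : ∀ k, ∃ a : ℝ, ∀ t, 0 < t → φ (Function.update 1 k t) = t ^ a := by
    intro k
    set F : ℝ → ℝ := fun u => Real.log (φ (Function.update 1 k (Real.exp u))) with hF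
    have hFadd : ∀ u v, F (u + v) = F u + F v := by
      intro u v
      simp only [hF]
      rw [← Real.log_mul (hpos _ (upd_pos k _ (Real.exp_pos u))).ne' (hpos _ (upd_pos k _ (Real.exp_pos v))).ne',
        ← hmul _ _ (upd_pos k _ (Real.exp_pos u)) (upd_pos k _ (Real.exp_pos v)), Real.exp_add]
      congr 2
      funext l
      by_cases h : l = k
      · subst h; simp
      · simp [h]
    have hFc : Continuous F := by
      have : Continuous fun u => φ (Function.update 1 k (Real.exp u)) :=
        (hc k).comp_continuous Real.continuous_exp (fun u => Real.exp_pos u)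
      exact this.log fun u => (hpos _ (upd_pos k _ (Real.exp_pos u))).ne'
    refine ⟨F 1, fun t ht => ?_⟩
    have hlin := map_real_smul (AddMonoidHom.mk' F hFadd) hFc (Real.log t) 1
    simp only [smul_eq_mul, mul_one, AddMonoidHom.mk'_apply] at hlin
    have : F (Real.log t) = Real.log (φ (Function.update 1 k t)) := by
      simp only [hF, Real.exp_log ht]
    rw [this] at hlin
    rw [Real.rpow_def_of_pos ht, ← hlin, Real.exp_log (hpos _ (upd_pos k t ht))]
  choose α hα using hk
  refine ⟨α, fun x hx => ?_⟩
  have hind : ∀ s : Finset (Fin d), φ (fun k => if k ∈ s then x k else 1) = ∏ k ∈ s, x k ^ α k := by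
    intro s
    induction s using Finset.induction_on with
    | empty =>
      have e : (fun k => if k ∈ (∅ : Finset (Fin d)) then x k else 1) = 1 := by
        funext k; simp
      rw [e, h1]; simp
    | insert k s hks ih =>
      rw [Finset.prod_insert hks, ← ih, ← hα k _ (hx k), ← hmul _ _ (upd_pos k _ (hx k))]
      · congr 1
        funext l
        by_cases h : l = k
        · subst h; simp [hks]
        · simp [h]
      · intro l
        split_ifs
        · exact hx l
        · exact one_pos
  simpa using hind Finset.univ

lemma sum_one {d : ℕ} (φ : (Fin d → ℝ) → ℝ) (α : Fin d → ℝ)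
    (hφ : ∀ x, (∀ k, 0 < x k) → φ x = ∏ k, x k ^ α k)
    (h2 : φ (fun _ => 2) = 2) : ∑ k, α k = 1 := by
  rw [hφ _ (fun _ => two_pos), ← Real.rpow_sum_of_pos two_pos] at h2
  have := congrArg Real.log h2
  rw [Real.log_rpow two_pos] at this
  have hl : Real.log 2 ≠ 0 := (Real.log_pos one_lt_two).ne'
  exact (mul_eq_right₀ hl).1 this

/-- everything about the forward direction apart from the sign conditions -/
lemma forward {d : ℕ} (hd : 1 ≤ d) (ε : ℝ) (hε : ε = 1 ∨ ε = -1)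
    (Φ : ∀ n : ℕ, (Fin d → Fin n → ℝ) → ℝ) (hΦ : MPhiBase Φ)
    (hm : ∀ (m n : ℕ) (P : Fin d → Fin m → ℝ) (Q : Fin d → Fin n → ℝ),
        TupOK P → TupOK Q → TupMaj P Q → ε * Φ n Q ≤ ε * Φ m P) :
    ∃ α : Fin d → ℝ, ∑ k, α k = 1 ∧
      (∀ (n : ℕ) (P : Fin d → Fin n → ℝ), TupOK P → Φ n P = fMat α P) ∧
      (∀ x y : Fin d → ℝ, (∀ k, 0 < x k) → (∀ k, 0 < y k) →
        ε * ∏ k, (x k + y k) ^ α k ≤ ε * (∏ k, x k ^ α k + ∏ k, y k ^ α k)) := by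
  have hsub : ∀ x y : Fin d → ℝ, (∀ k, 0 < x k) → (∀ k, 0 < y k) →
      ε * ph Φ (fun k => x k + y k) ≤ ε * (ph Φ x + ph Φ y) := by
    intro x y hx hy
    rw [← phi_two Φ hΦ x y hx hy]
    exact hm 2 1 _ _ (ok_two x y hx hy) (ok_pos _ fun k _ => add_pos (hx k) (hy k)) (maj_merge x y)
  have hone : ph Φ (fun _ => 1) = 1 := hΦ.2.2.2.2.2.1
  have hscal : ∀ t : ℝ, 0 < t → ph Φ (fun _ => t) = t := by
    refine add_id (fun t => ph Φ (fun _ => t)) (fun t ht => phi_pos Φ hΦ _ fun _ => ht) ?_ hone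
    intro s t hs ht
    have h1 := hsub (fun _ => s) (fun _ => t) (fun _ => hs) (fun _ => ht)
    have h2 := hm 1 2 _ _ (ok_pos _ fun _ _ => by positivity)
      (ok_two (fun _ => s * 1) (fun _ => t * 1) (fun _ => by positivity) (fun _ => by positivity))
      (maj_split (d := d) (fun _ => 1) s t hs ht)
    rw [phi_two Φ hΦ (fun _ => s * 1) (fun _ => t * 1) (fun _ => by positivity) (fun _ => by positivity)] at h2
    simp only [mul_one] at h2
    change ε * _ ≤ ε * ph Φ (fun _ => s + t) at h2
    have := le_antisymm h1 h2
    rcases hε with rfl | rfl <;> linarith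
  have hhom : ∀ (c : ℝ) (x : Fin d → ℝ), 0 < c → (∀ k, 0 < x k) →
      ph Φ (fun k => c * x k) = c * ph Φ x := by
    intro c x hc hx
    rw [phi_mul Φ hΦ (fun _ => c) x (fun _ => hc) hx, hscal c hc]
  have hcv : ∀ k, ConvexOn ℝ (Set.Ioi 0) (fun t : ℝ => ε * ph Φ (Function.update 1 k t)) := by
    intro k
    rw [convexOn_iff_forall_pos]
    refine ⟨convex_Ioi 0, ?_⟩
    intro s hs t ht a b ha hb hab
    have h := hsub (fun l => a * Function.update (1 : Fin d → ℝ) k s l) (fun l => b * Function.update (1 : Fin d → ℝ) k t l)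
      (fun l => mul_pos ha (upd_pos k s hs l)) (fun l => mul_pos hb (upd_pos k t ht l))
    rw [hhom a _ ha (upd_pos k s hs), hhom b _ hb (upd_pos k t ht)] at h
    have e : (fun l => a * Function.update (1 : Fin d → ℝ) k s l + b * Function.update (1 : Fin d → ℝ) k t l)
        = Function.update (1 : Fin d → ℝ) k (a • s + b • t) := by
      funext l
      by_cases hl : l = k
      · subst hl; simp
      · simp [hl, hab]
    rw [e] at h
    simp only [smul_eq_mul] at h ⊢
    linarith
  have hcont : ∀ k, ContinuousOn (fun t : ℝ => ph Φ (Function.update 1 k t)) (Set.Ioi 0) := by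
    intro k
    have h := ((hcv k).continuousOn isOpen_Ioi).const_mul ε
    refine h.congr fun t _ => ?_
    rcases hε with rfl | rfl <;> simp
  obtain ⟨α, hα⟩ := phi_form (ph Φ) (phi_pos Φ hΦ) (phi_mul Φ hΦ) hone hcont
  refine ⟨α, sum_one _ α hα (hscal 2 two_pos), ?_, ?_⟩
  · intro n P hP
    rw [phi_sum Φ hΦ n P hP, fMat_eq]
    refine Finset.sum_congr rfl fun i _ => ?_
    rcases row_dich P hP i with h | h
    · simp only [h, rowF_zero]
      exact hΦ.2.2.2.2.2.2
    · rw [hα _ h, rowF_pos_eq hd _ _ h]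
  · intro x y hx hy
    rw [← hα x hx, ← hα y hy, ← hα (fun k => x k + y k) (fun k => add_pos (hx k) (hy k))]
    exact hsub x y hx hy

lemma prod_upd {d : ℕ} (α : Fin d → ℝ) (k : Fin d) (t : ℝ) :
    ∏ l, Function.update (1 : Fin d → ℝ) k t l ^ α l = t ^ α k := by
  rw [Finset.prod_eq_single k]
  · simp
  · intro l _ hl; simp [hl]
  · simp

/-- midpoint inequality -/
lemma midpt {d : ℕ} (ε : ℝ) (α : Fin d → ℝ) (hs : ∑ k, α k = 1)
    (h : ∀ x y : Fin d → ℝ, (∀ k, 0 < x k) → (∀ k, 0 < y k) →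
        ε * ∏ k, (x k + y k) ^ α k ≤ ε * (∏ k, x k ^ α k + ∏ k, y k ^ α k))
    (x y z : Fin d → ℝ) (hx : ∀ k, 0 < x k) (hy : ∀ k, 0 < y k) (hz : ∀ k, x k + y k = 2 * z k) :
    ε * (2 * ∏ k, z k ^ α k) ≤ ε * (∏ k, x k ^ α k + ∏ k, y k ^ α k) := by
  have hzp : ∀ k, 0 ≤ z k := fun k => by linarith [hx k, hy k, hz k]
  have := h x y hx hy
  have e : ∏ k, (x k + y k) ^ α k = 2 * ∏ k, z k ^ α k := by
    simp only [hz]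
    rw [Finset.prod_congr rfl (fun k _ => Real.mul_rpow zero_le_two (hzp k)), Finset.prod_mul_distrib,
      ← Real.rpow_sum_of_pos two_pos, hs, Real.rpow_one]
  rwa [e] at this

lemma mid_one {d : ℕ} (ε : ℝ) (α : Fin d → ℝ) (hs : ∑ k, α k = 1)
    (h : ∀ x y : Fin d → ℝ, (∀ k, 0 < x k) → (∀ k, 0 < y k) →
        ε * ∏ k, (x k + y k) ^ α k ≤ ε * (∏ k, x k ^ α k + ∏ k, y k ^ α k))
    (k : Fin d) (s t : ℝ) (hs0 : 0 < s) (ht : 0 < t) (hst : s + t = 2) :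
    ε * 2 ≤ ε * (s ^ α k + t ^ α k) := by
  have := midpt ε α hs h _ _ (fun _ => 1) (upd_pos k s hs0) (upd_pos k t ht) (by
    intro l
    by_cases hl : l = k
    · subst hl; simp [hst]
    · simp [hl]; norm_num)
  simpa [prod_upd] using this

lemma sign_plus {d : ℕ} (α : Fin d → ℝ) (hs : ∑ k, α k = 1)
    (h : ∀ x y : Fin d → ℝ, (∀ k, 0 < x k) → (∀ k, 0 < y k) →
        (-1:ℝ) * ∏ k, (x k + y k) ^ α k ≤ (-1) * (∏ k, x k ^ α k + ∏ k, y k ^ α k)) :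
    memAplus α := by
  refine ⟨hs, fun k => ?_⟩
  by_contra hneg
  push Not at hneg
  set s : ℝ := 2 ^ (1 / α k) with hsd
  have hs0 : 0 < s := by positivity
  have hs1 : s < 1 := Real.rpow_lt_one_of_one_lt_of_neg one_lt_two (one_div_neg.2 hneg)
  have hsa : s ^ α k = 2 := by
    rw [hsd, ← Real.rpow_mul zero_le_two, one_div_mul_cancel hneg.ne, Real.rpow_one]
  have := mid_one (-1) α hs h k s (2 - s) hs0 (by linarith) (by ring)
  have hp : 0 < (2 - s) ^ α k := Real.rpow_pos_of_pos (by linarith) _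
  rw [hsa] at this
  linarith

lemma sign_minus {d : ℕ} (α : Fin d → ℝ) (hs : ∑ k, α k = 1)
    (h : ∀ x y : Fin d → ℝ, (∀ k, 0 < x k) → (∀ k, 0 < y k) →
        (1:ℝ) * ∏ k, (x k + y k) ^ α k ≤ 1 * (∏ k, x k ^ α k + ∏ k, y k ^ α k)) :
    memAminus α := by
  classical
  have hge : ∀ k, 0 < α k → 1 ≤ α k := by
    intro k hk
    by_contra hlt
    push Not at hlt
    have h1 := mid_one 1 α hs h k (1/2) (3/2) (by norm_num) (by norm_num) (by norm_num)
    have m1 : (1/2 : ℝ) ∈ Set.Ici (0:ℝ) := by norm_num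
    have m2 : (3/2 : ℝ) ∈ Set.Ici (0:ℝ) := by norm_num
    have h2 := (Real.strictConcaveOn_rpow hk hlt).2 m1 m2 (by norm_num)
      (show (0:ℝ) < 1/2 by norm_num) (show (0:ℝ) < 1/2 by norm_num) (by norm_num)
    have e : ((1/2 : ℝ) • (1/2 : ℝ) + (1/2 : ℝ) • (3/2 : ℝ)) = 1 := by norm_num
    rw [e] at h2
    simp only [smul_eq_mul, Real.one_rpow] at h2
    linarith
  have hex : ∃ k, 0 < α k := by
    by_contra hno
    push Not at hno
    have := Finset.sum_nonpos fun k (_ : k ∈ Finset.univ) => hno k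
    linarith
  obtain ⟨k, hk⟩ := hex
  refine ⟨hs, k, hge k hk, fun l hl => ?_⟩
  by_contra hpos
  push Not at hpos
  have ak := hge k hk
  have al := hge l hpos
  -- test vectors
  have key : ∀ s : ℝ, 0 < s → s < 1 → 2 ≤ s * (2 ^ α l + 2 ^ α k) := by
    intro s hs0 hs1
    have ht : 0 < 2 - s := by linarith
    have posu : ∀ a b : ℝ, 0 < a → 0 < b → ∀ i, 0 < Function.update (Function.update (1 : Fin d → ℝ) k a) l b i := by
      intro a b ha hb i
      by_cases h1 : i = l
      · subst h1; simpa
      · rw [Function.update_of_ne h1]; exact upd_pos k a ha i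
    have pr : ∀ a b : ℝ, ∏ i, Function.update (Function.update (1 : Fin d → ℝ) k a) l b i ^ α i
        = a ^ α k * b ^ α l := by
      intro a b
      have : ∀ i, Function.update (Function.update (1 : Fin d → ℝ) k a) l b i ^ α i
          = Function.update (1 : Fin d → ℝ) k a i ^ α i * Function.update (1 : Fin d → ℝ) l b i ^ α i := by
        intro i
        by_cases h1 : i = l
        · subst h1; simp [hl]
        · simp [h1]
      simp only [this, Finset.prod_mul_distrib, prod_upd]
    have := midpt 1 α hs h _ _ (fun _ => 1) (posu s (2 - s) hs0 ht) (posu (2 - s) s ht hs0) (by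
      intro i
      by_cases h1 : i = l
      · subst h1; simp
      · by_cases h2 : i = k
        · subst h2; simp [h1]
        · simp [h1, h2]; norm_num)
    rw [pr, pr] at this
    simp only [Real.one_rpow, Finset.prod_const_one, mul_one, one_mul] at this
    have b1 : s ^ α k ≤ s := by
      simpa using Real.rpow_le_rpow_of_exponent_ge hs0 hs1.le ak
    have b2 : s ^ α l ≤ s := by
      simpa using Real.rpow_le_rpow_of_exponent_ge hs0 hs1.le al
    have b3 : (2 - s) ^ α k ≤ 2 ^ α k := Real.rpow_le_rpow ht.le (by linarith) hk.le
    have b4 : (2 - s) ^ α l ≤ 2 ^ α l := Real.rpow_le_rpow ht.le (by linarith) hpos.le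
    have c1 : s ^ α k * (2 - s) ^ α l ≤ s * 2 ^ α l :=
      mul_le_mul b1 b4 (Real.rpow_nonneg ht.le _) hs0.le
    have c2 : (2 - s) ^ α k * s ^ α l ≤ 2 ^ α k * s :=
      mul_le_mul b3 b2 (Real.rpow_nonneg hs0.le _) (by positivity)
    linarith
  set M : ℝ := 2 ^ α l + 2 ^ α k with hM
  have hM0 : 0 < M := by positivity
  have := key (1 / (M + 1)) (by positivity) (by rw [div_lt_one (by positivity)]; linarith)
  rw [one_div_mul_eq_div, le_div_iff₀ (by positivity)] at this
  linarith

end MatCls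

/-- **Classification of monotone homomorphisms on the matrix majorization
semiring.**  A homomorphism that is monotone under matrix majorization is
`f_α` for some `α ∈ A₋`, and one that is antitone is `f_α` for `α ∈ A₊`;
conversely all these `f_α` have the listed properties. -/
theorem classification_monotone_homs_matrix {d : ℕ} (hd : 1 ≤ d) :
    (∀ Φ : ∀ n : ℕ, (Fin d → Fin n → ℝ) → ℝ, MPhiBase Φ →
      (∀ (m n : ℕ) (P : Fin d → Fin m → ℝ) (Q : Fin d → Fin n → ℝ),
        TupOK P → TupOK Q → TupMaj P Q → Φ n Q ≤ Φ m P) →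
      ∃ α : Fin d → ℝ, memAminus α ∧
        ∀ (n : ℕ) (P : Fin d → Fin n → ℝ), TupOK P → Φ n P = fMat α P) ∧
    (∀ α : Fin d → ℝ, memAminus α →
      MPhiBase (fun n P => fMat α P) ∧
      ∀ (m n : ℕ) (P : Fin d → Fin m → ℝ) (Q : Fin d → Fin n → ℝ),
        TupOK P → TupOK Q → TupMaj P Q → fMat α Q ≤ fMat α P) ∧
    (∀ Φ : ∀ n : ℕ, (Fin d → Fin n → ℝ) → ℝ, MPhiBase Φ →
      (∀ (m n : ℕ) (P : Fin d → Fin m → ℝ) (Q : Fin d → Fin n → ℝ),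
        TupOK P → TupOK Q → TupMaj P Q → Φ m P ≤ Φ n Q) →
      ∃ α : Fin d → ℝ, memAplus α ∧
        ∀ (n : ℕ) (P : Fin d → Fin n → ℝ), TupOK P → Φ n P = fMat α P) ∧
    (∀ α : Fin d → ℝ, memAplus α →
      MPhiBase (fun n P => fMat α P) ∧
      ∀ (m n : ℕ) (P : Fin d → Fin m → ℝ) (Q : Fin d → Fin n → ℝ),
        TupOK P → TupOK Q → TupMaj P Q → fMat α P ≤ fMat α Q) := by
  refine ⟨?_, ?_, ?_, ?_⟩
  · intro Φ hΦ hm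
    obtain ⟨α, hs, hf, hc⟩ := MatCls.forward hd 1 (Or.inl rfl) Φ hΦ
      (fun m n P Q hP hQ h => by simpa using hm m n P Q hP hQ h)
    exact ⟨α, MatCls.sign_minus α hs hc, hf⟩
  · intro α hα
    refine ⟨MatCls.base_fMat hd α, fun m n P Q hP hQ h => ?_⟩
    have := MatCls.mono_gen hd (-1) α hα.1
      (fun y hy => by linarith [MatCls.amgm_minus α hα y hy]) m n P Q hP hQ h
    linarith
  · intro Φ hΦ hm
    obtain ⟨α, hs, hf, hc⟩ := MatCls.forward hd (-1) (Or.inr rfl) Φ hΦ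
      (fun m n P Q hP hQ h => by linarith [hm m n P Q hP hQ h])
    exact ⟨α, MatCls.sign_plus α hs hc, hf⟩
  · intro α hα
    refine ⟨MatCls.base_fMat hd α, fun m n P Q hP hQ h => ?_⟩
    have := MatCls.mono_gen hd 1 α hα.1
      (fun y hy => by linarith [MatCls.amgm_plus α hα y hy]) m n P Q hP hQ h
    linarith
end
end

section
/- Let d ≥ 1, fix k ∈ {1,…,d}, and let Δ assign to every d-tuple P = (p⁽¹⁾,…,p⁽ᵈ⁾) of finite vectors with nonnegative entries of a common length, whose columns share a common support, a real number Δ(P), invariantly under simultaneous permutation of the rows and under appending all-zero rows, such that Δ(P ⊞ Q) = Δ(P) + Δ(Q), the Leibniz rule Δ(P ⊠ Q) = Δ(P)·‖q⁽ᵏ⁾‖₁ + ‖p⁽ᵏ⁾‖₁·Δ(Q) holds for all P, Q, and Δ is monotone in the sense that if there is a stochastic matrix T with T p⁽ˡ⁾ = q⁽ˡ⁾ for all ℓ = 1,…,d then Δ(P) ≥ Δ(Q). Then there exist γ_ℓ ≥ 0 (ℓ ≠ k) such that for every tuple P with ‖p⁽ᵏ⁾‖₁ ∈ ℚ one has Δ(P)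 = Σ_{ℓ≠k} γ_ℓ · Σ_{i∈I} p_i⁽ᵏ⁾ log( p_i⁽ᵏ⁾ / p_i⁽ˡ⁾ ), with I the common support. Conversely, for any γ_ℓ ≥ 0 this formula defines a map with all of the listed properties. -/
open scoped BigOperators NNReal

noncomputable section

/-- The basic properties of a monotone derivation at the `k`-th column
normalization on tuples of finite nonnegative vectors with common support:
invariance under simultaneous row permutations and appending an all-zero row,
additivity under `⊞`, the Leibniz rule with respect to `‖·‖₁` of the `k`-th
column under `⊠`, and antitonicity under matrix majorization. -/
def MDeltaBase {d : ℕ} (k : Fin d) (Δ : ∀ n : ℕ, (Fin d → Fin n → ℝ) → ℝ) : Prop :=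
  (∀ (n : ℕ) (σ : Equiv.Perm (Fin n)) (P : Fin d → Fin n → ℝ), TupOK P →
    Δ n (fun l => P l ∘ σ) = Δ n P) ∧
  (∀ (n : ℕ) (P : Fin d → Fin n → ℝ), TupOK P →
    Δ (n + 1) (fun l => Fin.snoc (P l) 0) = Δ n P) ∧
  (∀ (m n : ℕ) (P : Fin d → Fin m → ℝ) (Q : Fin d → Fin n → ℝ),
    TupOK P → TupOK Q →
    Δ (m + n) (fun l => Fin.append (P l) (Q l)) = Δ m P + Δ n Q) ∧
  (∀ (m n : ℕ) (P : Fin d → Fin m → ℝ) (Q : Fin d → Fin n → ℝ),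
    TupOK P → TupOK Q →
    Δ (m * n) (fun l => kronFin (P l) (Q l)) =
      Δ m P * (∑ j, Q k j) + (∑ i, P k i) * Δ n Q) ∧
  (∀ (m n : ℕ) (P : Fin d → Fin m → ℝ) (Q : Fin d → Fin n → ℝ),
    TupOK P → TupOK Q → TupMaj P Q → Δ n Q ≤ Δ m P)

lemma aux_additive_linear (F : ℝ →+ ℝ) (hF : ∀ u, 0 ≤ u → 0 ≤ F u) (u : ℝ) :
    F u = F 1 * u := by
  have hb : ∀ u : ℝ, |F u - F 1 * u| ≤ F 1 := by
    intro u
    have h1 : F u = F (Int.fract u) + ⌊u⌋ * F 1 := by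
      have : F ((⌊u⌋ : ℤ) • (1 : ℝ)) = (⌊u⌋ : ℤ) • F 1 := map_zsmul F _ _
      rw [zsmul_eq_mul, zsmul_eq_mul, mul_one] at this
      rw [← this, ← map_add, Int.fract_add_floor]
    have h0 := Int.fract_nonneg u
    have h2 := (Int.fract_lt_one u).le
    have h3 := hF _ h0
    have h4 := hF (1 - Int.fract u) (by linarith)
    rw [map_sub] at h4
    have h5 := hF 1 zero_le_one
    have h6 : F u - F 1 * u = F (Int.fract u) - F 1 * Int.fract u := by
      rw [h1]
      have := Int.fract_add_floor u
      nlinarith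
    rw [h6, abs_le]
    constructor <;> nlinarith
  by_contra hne
  have hpos : 0 < |F u - F 1 * u| := abs_pos.mpr (sub_ne_zero.mpr hne)
  obtain ⟨n, hn⟩ := exists_nat_gt (F 1 / |F u - F 1 * u|)
  rw [div_lt_iff₀ hpos] at hn
  have h := hb (n * u)
  have h1 : F (n * u) = n * F u := by
    have := map_nsmul F n u
    simpa [nsmul_eq_mul] using this
  rw [h1, show (n : ℝ) * F u - F 1 * (n * u) = n * (F u - F 1 * u) by ring, abs_mul,
    Nat.abs_cast] at h
  linarith

lemma aux_log (G : ℝ → ℝ) (hm : ∀ s t, 0 < s → 0 < t → G (s * t) = G s + G t)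
    (hG : ∀ s, 1 ≤ s → G s ≤ 0) : ∃ γ : ℝ, 0 ≤ γ ∧ ∀ s, 0 < s → G s = -γ * Real.log s := by
  let F : ℝ →+ ℝ := AddMonoidHom.mk' (fun u => -G (Real.exp u)) (by
    intro a b
    rw [Real.exp_add, hm _ _ (Real.exp_pos _) (Real.exp_pos _)]
    ring)
  have hF : ∀ u, 0 ≤ u → 0 ≤ F u := by
    intro u hu
    have := hG (Real.exp u) (Real.one_le_exp hu)
    change 0 ≤ -G (Real.exp u)
    linarith
  refine ⟨F 1, hF 1 zero_le_one, fun s hs => ?_⟩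
  have h := aux_additive_linear F hF (Real.log s)
  change -G (Real.exp (Real.log s)) = _ at h
  rw [Real.exp_log hs] at h
  linarith

lemma aux_core {d : ℕ} (k : Fin d) (φ : (Fin d → ℝ) → ℝ)
    (hmul : ∀ x y : Fin d → ℝ, (∀ l, 0 < x l) → (∀ l, 0 < y l) →
      φ (fun l => x l * y l) = φ x * y k + x k * φ y)
    (hadd : ∀ x y : Fin d → ℝ, (∀ l, 0 < x l) → (∀ l, 0 < y l) →
      φ (fun l => x l + y l) ≤ φ x + φ y)
    (h2 : φ (fun _ => 2) = 0) :
    ∃ γ : Fin d → ℝ, (∀ l, l ≠ k → 0 ≤ γ l) ∧ ∀ x : Fin d → ℝ, (∀ l, 0 < x l) →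
      φ x = (∑ l ∈ Finset.univ.erase k, γ l * (x k * Real.log (x k / x l)))
        + φ (fun _ => x k) := by
  have h1 : φ (fun _ => 1) = 0 := by
    have := hmul (fun _ => 1) (fun _ => 1) (fun _ => one_pos) (fun _ => one_pos)
    simp only [mul_one, one_mul] at this
    linarith
  let e : Fin d → ℝ → Fin d → ℝ := fun l s j => if j = l then s else 1
  have epos : ∀ l s, 0 < s → ∀ j, 0 < e l s j := by
    intro l s hs j
    simp only [e]
    split_ifs
    · exact hs
    · exact one_pos
  have ek : ∀ l s, l ≠ k → e l s k = 1 := by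
    intro l s h
    simp only [e]
    rw [if_neg (Ne.symm h)]
  have hg : ∀ l, ∃ γ : ℝ, l ≠ k → 0 ≤ γ ∧ ∀ s, 0 < s → φ (e l s) = -γ * Real.log s := by
    intro l
    by_cases hl : l = k
    · exact ⟨0, fun h => absurd hl h⟩
    have hm : ∀ s t, 0 < s → 0 < t → φ (e l (s * t)) = φ (e l s) + φ (e l t) := by
      intro s t hs ht
      have := hmul (e l s) (e l t) (epos l s hs) (epos l t ht)
      rw [ek l s hl, ek l t hl] at this
      rw [show e l (s * t) = fun j => e l s j * e l t j by
        funext j; simp only [e]; split_ifs <;> simp, this]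
      ring
    have he1 : φ (e l 1) = 0 := by
      rw [show e l 1 = fun _ => 1 by funext j; simp [e]]
      exact h1
    obtain ⟨γ, h0, hγ⟩ := aux_log (fun s => φ (e l s)) hm (by
      intro s hs
      have hsq := Real.sq_sqrt (show 0 ≤ s ^ 2 - 1 by nlinarith)
      have hsn := Real.sqrt_nonneg (s ^ 2 - 1)
      set t := s + Real.sqrt (s ^ 2 - 1) with ht
      have htp : 0 < t := by linarith
      have hti : t⁻¹ = s - Real.sqrt (s ^ 2 - 1) := by
        rw [inv_eq_iff_eq_inv]
        apply eq_inv_of_mul_eq_one_left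
        rw [ht]; nlinarith
      have ha := hadd (e l t) (e l t⁻¹) (epos l t htp) (epos l _ (inv_pos.mpr htp))
      rw [← hm _ _ htp (inv_pos.mpr htp), mul_inv_cancel₀ htp.ne', he1] at ha
      have hb := hmul (fun _ => 2) (e l s) (fun _ => two_pos) (epos l s (by linarith))
      rw [show (fun j => e l t j + e l t⁻¹ j) = fun j => 2 * e l s j by
        funext j; simp only [e]; split_ifs
        · rw [hti, ht]; ring
        · norm_num, hb, h2] at ha
      linarith)
    exact ⟨γ, fun _ => ⟨h0, hγ⟩⟩
  choose γ hγ using hg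
  refine ⟨γ, fun l hl => (hγ l hl).1, fun x hx => ?_⟩
  have hz : ∀ z : Fin d → ℝ, (∀ l, 0 < z l) → ∀ s : Finset (Fin d), k ∉ s →
      φ (fun j => if j ∈ s then z j else 1) = ∑ l ∈ s, φ (e l (z l)) := by
    intro z hz s
    induction s using Finset.induction_on with
    | empty => intro _; simpa using h1
    | insert a s ha ih =>
      intro hk
      rw [Finset.mem_insert, not_or] at hk
      have hak : a ≠ k := fun h => hk.1 h.symm
      rw [Finset.sum_insert ha, ← ih hk.2]
      have := hmul (e a (z a)) (fun j => if j ∈ s then z j else 1) (epos a _ (hz a)) (by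
        intro j
        split_ifs
        · exact hz j
        · exact one_pos)
      rw [ek a _ hak, if_neg hk.2, mul_one, one_mul] at this
      rw [← this]
      congr 1
      funext j
      simp only [e, Finset.mem_insert]
      by_cases hj : j = a
      · subst hj; simp [ha]
      · simp [hj]
  have hxk := hx k
  have h3 := hz (fun l => x l / x k) (fun l => div_pos (hx l) hxk) (Finset.univ.erase k)
    (Finset.notMem_erase _ _)
  have h4 : (fun j => if j ∈ Finset.univ.erase k then x j / x k else 1) = fun j => x j / x k := by
    funext j
    by_cases hj : j = k
    · subst hj; simp [hxk.ne']
    · simp [hj]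
  rw [h4] at h3
  have h5 := hmul (fun l => x l / x k) (fun _ => x k) (fun l => div_pos (hx l) hxk) (fun _ => hxk)
  rw [show (fun l => x l / x k * x k) = x by funext l; field_simp, h3, div_self hxk.ne',
    one_mul] at h5
  rw [h5, Finset.sum_mul]
  congr 1
  apply Finset.sum_congr rfl
  intro l hl
  rw [(hγ l (Finset.ne_of_mem_erase hl)).2 _ (div_pos (hx l) hxk),
    ← inv_div (x k) (x l), Real.log_inv]
  ring

lemma aux_forward {d : ℕ} (k : Fin d) (Δ : ∀ n : ℕ, (Fin d → Fin n → ℝ) → ℝ)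
    (h : MDeltaBase k Δ) :
    ∃ γ : Fin d → ℝ, (∀ l, l ≠ k → 0 ≤ γ l) ∧
        ∀ (n : ℕ) (P : Fin d → Fin n → ℝ), TupOK P →
          (∃ a : ℚ, (∑ i, P k i) = a) →
          Δ n P = ∑ l ∈ Finset.univ.erase k, γ l * KL (P k) (P l) := by
  obtain ⟨-, hz, hap, hkr, hmo⟩ := h
  let φ : (Fin d → ℝ) → ℝ := fun x => Δ 1 (fun l _ => x l)
  have ok1 : ∀ x : Fin d → ℝ, (∀ l, 0 < x l) → TupOK (fun l (_ : Fin 1) => x l) :=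
    fun x hx => ⟨fun l _ => (hx l).le, fun l m _ => by simp [(hx l).ne', (hx m).ne']⟩
  have ok2 : ∀ x y : Fin d → ℝ, (∀ l, 0 < x l) → (∀ l, 0 < y l) →
      TupOK (fun l => ![x l, y l]) := by
    intro x y hx hy
    constructor
    · intro l i; fin_cases i <;> simp [(hx _).le, (hy _).le]
    · intro l m i; fin_cases i <;> simp [(hx _).ne', (hy _).ne']
  have hΔ0 : ∀ P : Fin d → Fin 0 → ℝ, Δ 0 P = 0 := by
    intro P
    have := hap 0 0 P P ⟨fun _ i => i.elim0, fun _ _ i => i.elim0⟩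
      ⟨fun _ i => i.elim0, fun _ _ i => i.elim0⟩
    rw [show (fun l => Fin.append (P l) (P l)) = P by funext l i; exact i.elim0] at this
    change Δ 0 P = _ at this
    linarith
  have hsum : ∀ (n : ℕ) (P : Fin d → Fin n → ℝ), TupOK P →
      Δ n P = ∑ i, φ (fun l => P l i) := by
    intro n
    induction n with
    | zero => intro P _; simpa using hΔ0 P
    | succ n ih =>
      intro P hP
      have okA : TupOK (fun l (i : Fin n) => P l i.castSucc) :=
        ⟨fun l i => hP.1 l _, fun l m i => hP.2 l m _⟩
      have okB : TupOK (fun l (_ : Fin 1) => P l (Fin.last n)) :=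
        ⟨fun l i => hP.1 l _, fun l m i => hP.2 l m _⟩
      have := hap n 1 _ _ okA okB
      rw [ih _ okA] at this
      rw [Fin.sum_univ_castSucc, ← this]
      congr 1
      funext l i
      refine Fin.lastCases ?_ (fun i => ?_) i
      · exact (Fin.append_right (fun i : Fin n => P l i.castSucc)
          (fun _ : Fin 1 => P l (Fin.last n)) 0).symm
      · exact (Fin.append_left (fun i : Fin n => P l i.castSucc)
          (fun _ : Fin 1 => P l (Fin.last n)) i).symm
  have h0 : φ (fun _ => 0) = 0 := by
    have := hz 0 (fun _ i => i.elim0) ⟨fun _ i => i.elim0, fun _ _ i => i.elim0⟩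
    rw [hΔ0] at this
    refine Eq.trans ?_ this
    simp only [φ]
    congr 1
  have hmul : ∀ x y : Fin d → ℝ, (∀ l, 0 < x l) → (∀ l, 0 < y l) →
      φ (fun l => x l * y l) = φ x * y k + x k * φ y := by
    intro x y hx hy
    have := hkr 1 1 _ _ (ok1 x hx) (ok1 y hy)
    simp only [Finset.univ_unique, Finset.sum_singleton] at this
    exact this
  have hadd : ∀ x y : Fin d → ℝ, (∀ l, 0 < x l) → (∀ l, 0 < y l) →
      φ (fun l => x l + y l) ≤ φ x + φ y := by
    intro x y hx hy
    have := hmo 2 1 _ _ (ok2 x y hx hy) (ok1 (fun l => x l + y l) fun l => add_pos (hx l) (hy l))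
      ⟨fun _ _ => 1, ⟨fun _ _ => zero_le_one, fun _ => by simp⟩, fun l => by
        funext i; simp [matVec, Fin.sum_univ_two]⟩
    rw [hsum 2 _ (ok2 x y hx hy), Fin.sum_univ_two] at this
    exact this
  have hsplit : ∀ s t : ℝ, 0 < s → 0 < t →
      φ (fun _ => s) + φ (fun _ => t) ≤ φ (fun _ => s + t) := by
    intro s t hs ht
    have hst : 0 < s + t := add_pos hs ht
    have := hmo 1 2 _ _ (ok1 (fun _ => s + t) fun _ => hst)
      (ok2 (fun _ => s) (fun _ => t) (fun _ => hs) (fun _ => ht))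
      ⟨fun i _ => ![s / (s + t), t / (s + t)] i, ⟨fun i _ => by
          fin_cases i <;> simp <;> positivity, fun _ => by
          simp only [Fin.sum_univ_two, Matrix.cons_val_zero, Matrix.cons_val_one]
          field_simp⟩, fun l => by
        funext i
        fin_cases i <;> simp [matVec] <;> field_simp⟩
    rw [hsum 2 _ (ok2 _ _ (fun _ => hs) (fun _ => ht)), Fin.sum_univ_two] at this
    exact this
  let D : ℝ≥0 →+ ℝ := AddMonoidHom.mk' (fun s => φ (fun _ => (s : ℝ))) (by
    intro s t
    rcases eq_or_lt_of_le (show 0 ≤ s from bot_le) with rfl | hs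
    · simp [h0]
    rcases eq_or_lt_of_le (show 0 ≤ t from bot_le) with rfl | ht
    · simp [h0]
    have hs' : (0 : ℝ) < s := hs
    have ht' : (0 : ℝ) < t := ht
    apply le_antisymm
    · have := hadd (fun _ => (s : ℝ)) (fun _ => (t : ℝ)) (fun _ => hs') (fun _ => ht')
      simpa using this
    · have := hsplit s t hs' ht'
      simpa using this)
  have hD : ∀ s : ℝ≥0, D s = φ (fun _ => (s : ℝ)) := fun _ => rfl
  have hD1 : D 1 = 0 := by
    have := hmul (fun _ => 1) (fun _ => 1) (fun _ => one_pos) (fun _ => one_pos)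
    simp only [mul_one, one_mul] at this
    rw [hD]
    simp only [NNReal.coe_one]
    linarith
  have hDn : ∀ n : ℕ, D n = 0 := by
    intro n
    have := map_nsmul D n 1
    rw [hD1, smul_zero, nsmul_eq_mul, mul_one] at this
    exact this
  have hDq : ∀ (s : ℝ≥0) (a : ℚ), (s : ℝ) = a → D s = 0 := by
    intro s a ha
    have ha0 : 0 ≤ a := by
      have : (0 : ℝ) ≤ a := ha ▸ s.coe_nonneg
      exact_mod_cast this
    have hden : (a.den : ℝ) ≠ 0 := by exact_mod_cast a.den_nz
    have h1 : a.den • s = (a.num.toNat : ℝ≥0) := by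
      apply NNReal.coe_injective
      rw [nsmul_eq_mul]
      push_cast
      rw [ha]
      have hn : ((a.num.toNat : ℤ) : ℝ) = (a.num : ℝ) := by
        rw [Int.toNat_of_nonneg (Rat.num_nonneg.mpr ha0)]
      rw [show ((a.num.toNat : ℕ) : ℝ) = ((a.num.toNat : ℤ) : ℝ) by push_cast; rfl, hn]
      rw [Rat.cast_def]
      field_simp
    have h2 := map_nsmul D a.den s
    rw [h1, hDn, nsmul_eq_mul] at h2
    exact (mul_eq_zero.mp h2.symm).resolve_left hden
  obtain ⟨γ, hγ, hφ⟩ := aux_core k φ hmul hadd (by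
    have := hDn 2
    rw [hD] at this
    simpa using this)
  refine ⟨γ, hγ, fun n P hP ⟨a, ha⟩ => ?_⟩
  have hrow : ∀ i, φ (fun l => P l i) =
      (∑ l ∈ Finset.univ.erase k, γ l * (P k i * Real.log (P k i / P l i)))
        + D (Real.toNNReal (P k i)) := by
    intro i
    rw [hD, Real.coe_toNNReal _ (hP.1 k i)]
    by_cases hi : P k i = 0
    · have : ∀ l, P l i = 0 := fun l => by
        by_contra hne
        exact (hP.2 k l i).mpr hne hi
      simp [this, h0]
    · exact hφ (fun l => P l i) fun l => lt_of_le_of_ne (hP.1 l i) (Ne.symm ((hP.2 k l i).mp hi))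
  rw [hsum n P hP, Finset.sum_congr rfl fun i _ => hrow i, Finset.sum_add_distrib,
    ← map_sum, hDq _ a (by
      rw [← ha, NNReal.coe_sum]
      exact Finset.sum_congr rfl fun i _ => Real.coe_toNNReal _ (hP.1 k i)), add_zero, Finset.sum_comm]
  apply Finset.sum_congr rfl
  intro l _
  rw [KL, Finset.mul_sum]

lemma aux_logsum {m : ℕ} (t p q : Fin m → ℝ) (ht : ∀ j, 0 ≤ t j) (hp : ∀ j, 0 ≤ p j)
    (hq : ∀ j, 0 ≤ q j) (hpq : ∀ j, p j ≠ 0 ↔ q j ≠ 0) :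
    (∑ j, t j * p j) * Real.log ((∑ j, t j * p j) / ∑ j, t j * q j) ≤
      ∑ j, t j * (p j * Real.log (p j / q j)) := by
  set A := ∑ j, t j * p j with hA
  set B := ∑ j, t j * q j with hB
  have hA0 : 0 ≤ A := Finset.sum_nonneg fun j _ => mul_nonneg (ht j) (hp j)
  have hB0 : 0 ≤ B := Finset.sum_nonneg fun j _ => mul_nonneg (ht j) (hq j)
  have key : ∀ a b : ℝ, 0 < a → 0 < b →
      ∀ j, t j * p j * Real.log (a / b) + (t j * p j - t j * q j * (a / b))
        ≤ t j * (p j * Real.log (p j / q j)) := by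
    intro a b ha hb j
    by_cases hj : p j = 0
    · have : q j = 0 := by
        by_contra hne
        exact (hpq j).mpr hne hj
      simp [hj, this]
    have hpj : 0 < p j := lt_of_le_of_ne (hp j) (Ne.symm hj)
    have hqj : 0 < q j := lt_of_le_of_ne (hq j) (Ne.symm ((hpq j).mp hj))
    have h1 := Real.log_le_sub_one_of_pos (show 0 < (a / b) / (p j / q j) by positivity)
    rw [Real.log_div (by positivity) (by positivity)] at h1
    have h2 := mul_le_mul_of_nonneg_left h1 (mul_nonneg (ht j) (hp j))
    have h3 : t j * p j * ((a / b) / (p j / q j) - 1) = t j * q j * (a / b) - t j * p j := by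
      field_simp
    rw [h3] at h2
    linarith
  have hAB : A = 0 ↔ B = 0 := by
    rw [hA, hB, Finset.sum_eq_zero_iff_of_nonneg fun j _ => mul_nonneg (ht j) (hp j),
      Finset.sum_eq_zero_iff_of_nonneg fun j _ => mul_nonneg (ht j) (hq j)]
    refine forall_congr' fun j => ?_
    rw [mul_eq_zero, mul_eq_zero, not_iff_not.mp (hpq j)]
  by_cases h0 : A = 0
  · have hz : ∀ j, t j * p j = 0 := fun j =>
      (Finset.sum_eq_zero_iff_of_nonneg fun j _ => mul_nonneg (ht j) (hp j)).mp h0 j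
        (Finset.mem_univ j)
    rw [h0, zero_mul]
    apply le_of_eq
    symm
    apply Finset.sum_eq_zero
    intro j _
    rw [← mul_assoc, hz j, zero_mul]
  · have hAp : 0 < A := lt_of_le_of_ne hA0 (Ne.symm h0)
    have hBp : 0 < B := lt_of_le_of_ne hB0 (Ne.symm fun h => h0 (hAB.mpr h))
    refine le_trans (le_of_eq ?_) (Finset.sum_le_sum fun j _ => key A B hAp hBp j)
    rw [Finset.sum_add_distrib, Finset.sum_sub_distrib, ← Finset.sum_mul, ← Finset.sum_mul,
      ← hA, ← hB]
    field_simp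
    ring

lemma aux_KL_mono {m n : ℕ} (T : Fin n → Fin m → ℝ) (hT : IsStochastic T) (p q : Fin m → ℝ)
    (hp : ∀ j, 0 ≤ p j) (hq : ∀ j, 0 ≤ q j) (hpq : ∀ j, p j ≠ 0 ↔ q j ≠ 0) :
    KL (matVec T p) (matVec T q) ≤ KL p q := by
  calc KL (matVec T p) (matVec T q)
      ≤ ∑ i, ∑ j, T i j * (p j * Real.log (p j / q j)) :=
        Finset.sum_le_sum fun i _ => aux_logsum (T i) p q (hT.1 i) hp hq hpq
    _ = KL p q := by
        rw [Finset.sum_comm]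
        apply Finset.sum_congr rfl
        intro j _
        rw [← Finset.sum_mul, hT.2 j, one_mul]

lemma aux_KL_kron {m n : ℕ} (p q : Fin m → ℝ) (r s : Fin n → ℝ)
    (hpq : ∀ j, p j ≠ 0 ↔ q j ≠ 0) (hrs : ∀ j, r j ≠ 0 ↔ s j ≠ 0) :
    KL (kronFin p r) (kronFin q s) = KL p q * (∑ j, r j) + (∑ i, p i) * KL r s := by
  have h : KL (kronFin p r) (kronFin q s) =
      ∑ x : Fin m × Fin n, (p x.1 * r x.2) * Real.log ((p x.1 * r x.2) / (q x.1 * s x.2)) :=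
    Equiv.sum_comp finProdFinEquiv.symm
      (fun x : Fin m × Fin n => (p x.1 * r x.2) * Real.log ((p x.1 * r x.2) / (q x.1 * s x.2)))
  rw [h, KL, KL, Finset.sum_mul_sum, Finset.sum_mul_sum, Fintype.sum_prod_type,
    ← Finset.sum_add_distrib]
  refine Finset.sum_congr rfl fun i _ => ?_
  rw [← Finset.sum_add_distrib]
  refine Finset.sum_congr rfl fun j _ => ?_
  simp only
  by_cases hi : p i = 0
  · simp [hi]
  by_cases hj : r j = 0
  · simp [hj]
  have hqi := (hpq i).mp hi
  have hsj := (hrs j).mp hj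
  rw [mul_div_mul_comm, Real.log_mul (div_ne_zero hi hqi) (div_ne_zero hj hsj)]
  ring

lemma aux_backward {d : ℕ} (k : Fin d) (γ : Fin d → ℝ) (hγ : ∀ l, l ≠ k → 0 ≤ γ l) :
    MDeltaBase k (fun n P => ∑ l ∈ Finset.univ.erase k, γ l * KL (P k) (P l)) := by
  refine ⟨?_, ?_, ?_, ?_, ?_⟩
  · intro n σ P _
    refine Finset.sum_congr rfl fun l _ => ?_
    congr 1
    exact Equiv.sum_comp σ (fun i => P k i * Real.log (P k i / P l i))
  · intro n P _
    refine Finset.sum_congr rfl fun l _ => ?_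
    congr 1
    simp [KL, Fin.sum_univ_castSucc]
  · intro m n P Q _ _
    simp only
    rw [← Finset.sum_add_distrib]
    refine Finset.sum_congr rfl fun l _ => ?_
    rw [← mul_add]
    congr 1
    simp [KL, Fin.sum_univ_add]
  · intro m n P Q hP hQ
    simp only
    rw [Finset.sum_mul, Finset.mul_sum, ← Finset.sum_add_distrib]
    refine Finset.sum_congr rfl fun l _ => ?_
    rw [aux_KL_kron _ _ _ _ (hP.2 k l) (hQ.2 k l)]
    ring
  · rintro m n P Q hP hQ ⟨T, hT, hTP⟩
    refine Finset.sum_le_sum fun l hl => ?_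
    rw [← hTP k, ← hTP l]
    exact mul_le_mul_of_nonneg_left (aux_KL_mono T hT _ _ (hP.1 k) (hP.1 l) (hP.2 k l))
      (hγ l (Finset.ne_of_mem_erase hl))

/-- **Classification of monotone derivations on the matrix majorization
semiring.**  A monotone derivation at the `k`-th column normalization is a
nonnegative combination `Σ_{ℓ≠k} γ_ℓ D₁(p⁽ᵏ⁾‖p⁽ˡ⁾)` of Kullback–Leibler
divergences on all tuples whose `k`-th column has rational total sum;
conversely every such combination has all the listed properties. -/
theorem classification_monotone_derivations_matrix
    {d : ℕ} (hd : 1 ≤ d) (k : Fin d) :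
    (∀ Δ : ∀ n : ℕ, (Fin d → Fin n → ℝ) → ℝ, MDeltaBase k Δ →
      ∃ γ : Fin d → ℝ, (∀ l, l ≠ k → 0 ≤ γ l) ∧
        ∀ (n : ℕ) (P : Fin d → Fin n → ℝ), TupOK P →
          (∃ a : ℚ, (∑ i, P k i) = a) →
          Δ n P = ∑ l ∈ Finset.univ.erase k, γ l * KL (P k) (P l)) ∧
    (∀ γ : Fin d → ℝ, (∀ l, l ≠ k → 0 ≤ γ l) →
      MDeltaBase k (fun n P => ∑ l ∈ Finset.univ.erase k, γ l * KL (P k) (P l))) := by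
  exact ⟨fun Δ h => aux_forward k Δ h, fun γ hγ => aux_backward k γ hγ⟩
end
end

section
/- Let d ≥ 1 and let P = (p⁽¹⁾,…,p⁽ᵈ⁾) be a d-tuple of probability vectors of length n sharing a common support. (i) For every α ∈ (A₊ ∪ A₋) \ {e₁,…,e_d}, one has D_α(P) ≥ 0, with equality if and only if all columns p⁽ᵏ⁾ with α_k ≠ 0 are equal. (ii) For every β ∈ B₋ \ {0}, one has D^T_β(P) ≥ 0, with equality if and only if all columns p⁽ᵏ⁾ with β_k ≠ 0 are equal. -/
open scoped BigOperators NNReal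

noncomputable section

lemma aux_prod_const {d n : ℕ} (P : Fin d → Fin n → ℝ) (c : Fin d → ℝ) (k0 : Fin d)
    (h : ∀ k, c k ≠ 0 → P k = P k0) (i : Fin n) (hi : 0 < P k0 i) :
    ∏ k, P k i ^ c k = P k0 i ^ (∑ k, c k) := by
  rw [Real.rpow_sum_of_pos hi]
  refine Finset.prod_congr rfl fun k _ => ?_
  by_cases hc : c k = 0
  · simp [hc]
  · rw [h k hc]

lemma aux_prod_exp {d n : ℕ} (P : Fin d → Fin n → ℝ) (c : Fin d → ℝ) (k0 : Fin d)
    (i : Fin n) (hi : ∀ k, 0 < P k i) :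
    ∏ k, P k i ^ c k
      = P k0 i ^ (∑ k, c k) * Real.exp (∑ k, c k * Real.log (P k i / P k0 i)) := by
  rw [Real.rpow_sum_of_pos (hi k0), Real.exp_sum, ← Finset.prod_mul_distrib]
  refine Finset.prod_congr rfl fun k _ => ?_
  rw [Real.rpow_def_of_pos (hi k), Real.rpow_def_of_pos (hi k0), ← Real.exp_add,
    Real.log_div (hi k).ne' (hi k0).ne']
  congr 1
  ring

/-- The key linearised estimate. -/
lemma aux_key {d n : ℕ} (P : Fin d → Fin n → ℝ) (I : Finset (Fin n))
    (hpos : ∀ i ∈ I, ∀ k, 0 < P k i) (hzero : ∀ i, i ∉ I → ∀ k, P k i = 0)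
    (hsum : ∀ k, ∑ i ∈ I, P k i = 1) (c : Fin d → ℝ) (k0 : Fin d)
    (hc : ∀ k, k ≠ k0 → c k ≤ 0)
    (h : ∑ i ∈ I, P k0 i * ∑ k, c k * Real.log (P k i / P k0 i) ≤ 0) :
    ∀ k, c k ≠ 0 → P k = P k0 := by
  have hterm : ∀ i ∈ I, ∀ k, c k * (P k i - P k0 i)
      ≤ P k0 i * (c k * Real.log (P k i / P k0 i)) := by
    intro i hi k
    have h0 := hpos i hi k0
    by_cases hk : k = k0
    · subst hk
      simp [h0.ne']
    · have hl := Real.log_le_sub_one_of_pos (div_pos (hpos i hi k) h0)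
      have h2 : P k0 i * Real.log (P k i / P k0 i) ≤ P k i - P k0 i := by
        calc _ ≤ P k0 i * (P k i / P k0 i - 1) := by gcongr
          _ = _ := by field_simp
      have := mul_le_mul_of_nonpos_left h2 (hc k hk)
      linarith
  have hT : ∑ i ∈ I, ∑ k, c k * (P k i - P k0 i) = 0 := by
    rw [Finset.sum_comm]
    refine Finset.sum_eq_zero fun k _ => ?_
    rw [← Finset.mul_sum, Finset.sum_sub_distrib, hsum, hsum]
    simp
  have hle : ∀ i ∈ I, ∑ k, c k * (P k i - P k0 i)
      ≤ P k0 i * ∑ k, c k * Real.log (P k i / P k0 i) := by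
    intro i hi
    rw [Finset.mul_sum]
    exact Finset.sum_le_sum fun k _ => hterm i hi k
  have heq := (Finset.sum_eq_sum_iff_of_le hle).1
    (le_antisymm (Finset.sum_le_sum hle) (h.trans hT.ge))
  intro k hk
  funext i
  by_cases hi : i ∈ I
  · have h1 := heq i hi
    rw [Finset.mul_sum] at h1
    have h2 := (Finset.sum_eq_sum_iff_of_le fun k _ => hterm i hi k).1 h1 k (Finset.mem_univ k)
    have h0 := hpos i hi k0
    by_contra hne
    have hne1 : P k i / P k0 i ≠ 1 := by
      intro h; rw [div_eq_one_iff_eq h0.ne'] at h; exact hne h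
    have hl := Real.log_lt_sub_one_of_pos (div_pos (hpos i hi k) h0) hne1
    have h3 : P k0 i * Real.log (P k i / P k0 i) < P k i - P k0 i := by
      calc _ < P k0 i * (P k i / P k0 i - 1) := by gcongr
        _ = _ := by field_simp
    have h4 : c k * (P k i - P k0 i) = c k * (P k0 i * Real.log (P k i / P k0 i)) := by
      rw [h2]; ring
    have h5 := mul_left_cancel₀ hk h4
    linarith
  · rw [hzero i hi, hzero i hi]

lemma aux_minus {d n : ℕ} (P : Fin d → Fin n → ℝ) (I : Finset (Fin n))
    (hpos : ∀ i ∈ I, ∀ k, 0 < P k i) (hzero : ∀ i, i ∉ I → ∀ k, P k i = 0)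
    (hsum : ∀ k, ∑ i ∈ I, P k i = 1) (c : Fin d → ℝ) (k0 : Fin d)
    (hc : ∀ k, k ≠ k0 → c k ≤ 0) (hc1 : ∑ k, c k = 1)
    (h : ∑ i ∈ I, ∏ k, P k i ^ c k ≤ 1) :
    ∀ k, c k ≠ 0 → P k = P k0 := by
  apply aux_key P I hpos hzero hsum c k0 hc
  have : ∑ i ∈ I, (P k0 i + P k0 i * ∑ k, c k * Real.log (P k i / P k0 i))
      ≤ ∑ i ∈ I, ∏ k, P k i ^ c k := by
    refine Finset.sum_le_sum fun i hi => ?_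
    rw [aux_prod_exp P c k0 i (hpos i hi), hc1, Real.rpow_one]
    have := mul_le_mul_of_nonneg_left
      (Real.add_one_le_exp (∑ k, c k * Real.log (P k i / P k0 i))) (hpos i hi k0).le
    linarith
  rw [Finset.sum_add_distrib, hsum] at this
  linarith

lemma aux_plus {d n : ℕ} (P : Fin d → Fin n → ℝ) (I : Finset (Fin n))
    (hpos : ∀ i ∈ I, ∀ k, 0 < P k i) (hzero : ∀ i, i ∉ I → ∀ k, P k i = 0)
    (hsum : ∀ k, ∑ i ∈ I, P k i = 1) (c : Fin d → ℝ)
    (hc : ∀ k, 0 ≤ c k) (hc1 : ∑ k, c k = 1)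
    (h : 1 ≤ ∑ i ∈ I, ∏ k, P k i ^ c k) :
    ∀ k l, c k ≠ 0 → c l ≠ 0 → P k = P l := by
  have hle : ∀ i ∈ I, ∏ k, P k i ^ c k ≤ ∑ k, c k * P k i := fun i hi =>
    Real.geom_mean_le_arith_mean_weighted _ _ _ (fun k _ => hc k) hc1
      (fun k _ => (hpos i hi k).le)
  have hT : ∑ i ∈ I, ∑ k, c k * P k i = 1 := by
    rw [Finset.sum_comm, ← hc1]
    refine Finset.sum_congr rfl fun k _ => ?_
    rw [← Finset.mul_sum, hsum, mul_one]
  have heq := (Finset.sum_eq_sum_iff_of_le hle).1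
    (le_antisymm (Finset.sum_le_sum hle) (hT.le.trans h))
  intro k l hk hl
  funext i
  by_cases hi : i ∈ I
  · have h1 := (Real.geom_mean_eq_arith_mean_weighted_iff Finset.univ c (fun k => P k i)
      (fun k _ => hc k) hc1 (fun k _ => (hpos i hi k).le)).1 (heq i hi)
    exact (h1 k (Finset.mem_univ k) hk).trans (h1 l (Finset.mem_univ l) hl).symm
  · rw [hzero i hi, hzero i hi]

lemma aux_basis {d : ℕ} (α : Fin d → ℝ) (k : Fin d) (hs : ∑ k, α k = 1) (hk : α k = 1)
    (hsg : (∀ l, l ≠ k → 0 ≤ α l) ∨ (∀ l, l ≠ k → α l ≤ 0)) : α = Pi.single k 1 := by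
  have hz : ∑ l ∈ Finset.univ.erase k, α l = 0 := by
    have := Finset.add_sum_erase Finset.univ α (Finset.mem_univ k)
    linarith
  have h0 : ∀ l ∈ Finset.univ.erase k, α l = 0 := by
    rcases hsg with h | h
    · exact (Finset.sum_eq_zero_iff_of_nonneg
        (fun l hl => h l (Finset.ne_of_mem_erase hl))).1 hz
    · exact (Finset.sum_eq_zero_iff_of_nonpos
        (fun l hl => h l (Finset.ne_of_mem_erase hl))).1 hz
  funext l
  by_cases hl : l = k
  · subst hl; simp [hk]
  · rw [Pi.single_eq_of_ne hl]
    exact h0 l (by simp [hl])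

/-- Index with a nonzero coefficient. -/
lemma aux_exists {d : ℕ} (c : Fin d → ℝ) (hc : ∑ k, c k = 1) : ∃ k, c k ≠ 0 := by
  by_contra! h
  simp [h] at hc

/-- **Nonnegativity and faithfulness of the matrix divergences.**  For a tuple
`P` of probability vectors with common support, `D_α(P) ≥ 0` with equality iff
all columns `p⁽ᵏ⁾` with `α_k ≠ 0` coincide, and `D^𝕋_β(P) ≥ 0` with equality
iff all columns `p⁽ᵏ⁾` with `β_k ≠ 0` coincide. -/
theorem matrix_divergence_nonneg_faithful
    {d n : ℕ} (hd : 1 ≤ d) (P : Fin d → Fin n → ℝ)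
    (hP : ∀ k, IsProbVec (P k))
    (hsupp : ∀ k l i, P k i ≠ 0 ↔ P l i ≠ 0) :
    (∀ α : Fin d → ℝ, (memAplus α ∨ memAminus α) → notBasis α →
      0 ≤ Dmat α P ∧
        (Dmat α P = 0 ↔ ∀ k l, α k ≠ 0 → α l ≠ 0 → P k = P l)) ∧
    (∀ β : Fin d → ℝ, memBminus β → β ≠ 0 →
      0 ≤ DmatT β P ∧
        (DmatT β P = 0 ↔ ∀ k l, β k ≠ 0 → β l ≠ 0 → P k = P l)) := by
  have hne : Nonempty (Fin d) := ⟨⟨0, hd⟩⟩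
  set I := suppIdx P with hI
  have hzero : ∀ i, i ∉ I → ∀ k, P k i = 0 := by
    intro i hi k
    by_contra h
    exact hi (by simp only [hI, suppIdx, Finset.mem_filter, Finset.mem_univ, true_and]; exact ⟨k, h⟩)
  have hpos : ∀ i ∈ I, ∀ k, 0 < P k i := by
    intro i hi k
    simp only [hI, suppIdx, Finset.mem_filter, Finset.mem_univ, true_and] at hi
    obtain ⟨l, hl⟩ := hi
    exact lt_of_le_of_ne ((hP k).1 i) (Ne.symm ((hsupp l k i).1 hl))
  have hsum : ∀ k, ∑ i ∈ I, P k i = 1 := by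
    intro k
    rw [← (hP k).2]
    exact Finset.sum_subset (Finset.subset_univ _) fun i _ hi => hzero i hi k
  have hIne : I.Nonempty := by
    rw [Finset.nonempty_iff_ne_empty]
    intro h
    have := hsum ⟨0, hd⟩
    simp [h] at this
  have hbdd : ∀ c : Fin d → ℝ, BddAbove (Set.range c) := fun c => (Set.finite_range c).bddAbove
  constructor
  · intro α hα hnb
    have hα1 : ∑ k, α k = 1 := by rcases hα with h | h <;> exact h.1
    have hS0 : 0 < ∑ i ∈ I, ∏ k, P k i ^ α k :=
      Finset.sum_pos (fun i hi => Finset.prod_pos fun k _ => Real.rpow_pos_of_pos (hpos i hi k) _)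
        hIne
    have hS1 : (∀ k l, α k ≠ 0 → α l ≠ 0 → P k = P l) → ∑ i ∈ I, ∏ k, P k i ^ α k = 1 := by
      intro h
      obtain ⟨k0, hk0⟩ := aux_exists α hα1
      rw [← hsum k0]
      refine Finset.sum_congr rfl fun i hi => ?_
      rw [aux_prod_const P α k0 (fun k hk => h k k0 hk hk0) i (hpos i hi k0), hα1, Real.rpow_one]
    unfold Dmat
    rw [← hI]
    set S := ∑ i ∈ I, ∏ k, P k i ^ α k with hS
    have hlog : Real.log S = 0 ↔ S = 1 := by
      constructor
      · intro h
        exact Real.eq_one_of_pos_of_log_eq_zero hS0 h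
      · intro h; simp [h]
    rcases hα with ⟨_, hnn⟩ | ⟨_, k0, hk0, hnp⟩
    · have hmax : (⨆ k, α k) - 1 < 0 := by
        obtain ⟨k, hk⟩ := exists_eq_ciSup_of_finite (f := α)
        rw [← hk, sub_neg]
        refine lt_of_le_of_ne ?_ fun h => hnb k
          (aux_basis α k hα1 h (Or.inl fun l _ => hnn l))
        rw [← hα1]
        exact Finset.single_le_sum (fun l _ => hnn l) (Finset.mem_univ k)
      have hfw : 1 ≤ S → ∀ k l, α k ≠ 0 → α l ≠ 0 → P k = P l :=
        aux_plus P I hpos hzero hsum α hnn hα1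
      have hle : S ≤ 1 := by
        by_contra! h
        exact h.ne' (hS1 (hfw h.le))
      refine ⟨mul_nonneg_of_nonpos_of_nonpos (one_div_neg.2 hmax).le
        (Real.log_nonpos hS0.le hle), ?_⟩
      rw [mul_eq_zero, or_iff_right (one_div_neg.2 hmax).ne, hlog]
      exact ⟨fun h => hfw h.ge, hS1⟩
    · have hmax : 0 < (⨆ k, α k) - 1 := by
        have h1 : 1 < α k0 := lt_of_le_of_ne hk0 fun h => hnb k0
          (aux_basis α k0 hα1 h.symm (Or.inr hnp))
        have := le_ciSup (hbdd α) k0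
        linarith
      have hfw : S ≤ 1 → ∀ k l, α k ≠ 0 → α l ≠ 0 → P k = P l := by
        intro h k l hk hl
        have := aux_minus P I hpos hzero hsum α k0 hnp hα1 h
        rw [this k hk, this l hl]
      have hle : 1 ≤ S := by
        by_contra! h
        exact h.ne (hS1 (hfw h.le))
      refine ⟨mul_nonneg (one_div_pos.2 hmax).le (Real.log_nonneg hle), ?_⟩
      rw [mul_eq_zero, or_iff_right (one_div_pos.2 hmax).ne', hlog]
      exact ⟨fun h => hfw h.le, hS1⟩
  · intro β ⟨hβ0, k0, hk0, hnp⟩ hβ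
    have hk0pos : 0 < β k0 := by
      refine lt_of_le_of_ne hk0 fun h => hβ ?_
      have hall : ∀ l, β l ≤ 0 := by
        intro l
        by_cases hl : l = k0
        · rw [hl, ← h]
        · exact hnp l hl
      funext l
      exact (Finset.sum_eq_zero_iff_of_nonpos (fun l _ => hall l)).1 hβ0 l (Finset.mem_univ l)
    have hmax : 0 < ⨆ k, β k := hk0pos.trans_le (le_ciSup (hbdd β) k0)
    unfold DmatT
    rw [← hI]
    have hinner : ∀ i ∈ I, (⨆ (_ : i ∈ I), ∏ k, P k i ^ β k) = ∏ k, P k i ^ β k :=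
      fun i hi => ciSup_pos hi
    have houter : ∀ i, i ∉ I → (⨆ (_ : i ∈ I), ∏ k, P k i ^ β k) = 0 := by
      intro i hi
      have : IsEmpty (i ∈ I) := ⟨hi⟩
      exact Real.iSup_of_isEmpty _
    have hM : ∀ i ∈ I, ∏ k, P k i ^ β k ≤ ⨆ i, ⨆ (_ : i ∈ I), ∏ k, P k i ^ β k := by
      intro i hi
      rw [← hinner i hi]
      exact le_ciSup (f := fun i => ⨆ (_ : i ∈ I), ∏ k, P k i ^ β k)
        (Set.finite_range _).bddAbove i
    have hS1 : (∀ k l, β k ≠ 0 → β l ≠ 0 → P k = P l) →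
        (⨆ i, ⨆ (_ : i ∈ I), ∏ k, P k i ^ β k) = 1 := by
      intro h
      have hone : ∀ i ∈ I, ∏ k, P k i ^ β k = 1 := by
        intro i hi
        rw [aux_prod_const P β k0 (fun k hk => h k k0 hk hk0pos.ne') i (hpos i hi k0), hβ0,
          Real.rpow_zero]
      obtain ⟨i0, hi0⟩ := hIne
      have : Nonempty (Fin n) := ⟨i0⟩
      apply le_antisymm
      · refine ciSup_le fun i => ?_
        by_cases hi : i ∈ I
        · rw [hinner i hi, hone i hi]
        · rw [houter i hi]; exact zero_le_one
      · rw [← hone i0 hi0]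
        exact hM i0 hi0
    have hM0 : 0 < ⨆ i, ⨆ (_ : i ∈ I), ∏ k, P k i ^ β k := by
      obtain ⟨i0, hi0⟩ := hIne
      exact lt_of_lt_of_le
        (Finset.prod_pos fun k _ => Real.rpow_pos_of_pos (hpos i0 hi0 k) _) (hM i0 hi0)
    generalize (⨆ i, ⨆ (_ : i ∈ I), ∏ k, P k i ^ β k) = S at hM hS1 hM0
    have hfw : S ≤ 1 → ∀ k l, β k ≠ 0 → β l ≠ 0 → P k = P l := by
      intro h k l hk hl
      have := aux_key P I hpos hzero hsum β k0 hnp (by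
        refine Finset.sum_nonpos fun i hi => mul_nonpos_of_nonneg_of_nonpos (hpos i hi k0).le ?_
        have h1 := (hM i hi).trans h
        rw [aux_prod_exp P β k0 i (hpos i hi), hβ0, Real.rpow_zero, one_mul,
          Real.exp_le_one_iff] at h1
        exact h1)
      rw [this k hk, this l hl]
    have hle : 1 ≤ S := by
      by_contra! h
      exact h.ne (hS1 (hfw h.le))
    have hlog : Real.log S = 0 ↔ S = 1 := by
      constructor
      · intro h
        exact Real.eq_one_of_pos_of_log_eq_zero hM0 h
      · intro h; simp [h]
    refine ⟨mul_nonneg (one_div_pos.2 hmax).le (Real.log_nonneg hle), ?_⟩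
    rw [mul_eq_zero, or_iff_right (one_div_pos.2 hmax).ne', hlog]
    exact ⟨fun h => hfw h.le, hS1⟩
end
end
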